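/- arXiv:1710.02838 — 4 statements merged into one kernel-verified Lean document; each statement's English description precedes it below -/
import Mathlib

section
/- Let f_pre be the precision aggregation scheme defined below. For all real numbers x, y, z with 0 ≤ x ≤ y ≤ z ≤ 1 and x < z, ((z−y)/(z−x))·(f_pre(y,x) − x)² + ((y−x)/(z−x))·(f_pre(y,z) − z)² ≤ (5√5 − 11)/8. -/
noncomputable section

/-- The precision `φ(v) = 1/(v(1-v))` of a forecast `v`. -/
def phi (v : ℝ) : ℝ := 1 / (v * (1 - v))

/-- The precision aggregation scheme. -/
def fpre (x₁ x₂ : ℝ) : ℝ :=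
  if (x₁ = 0 ∧ x₂ = 1) ∨ (x₁ = 1 ∧ x₂ = 0) then 1/2
  else if x₁ = 0 ∨ x₂ = 0 then 0
  else if x₁ = 1 ∨ x₂ = 1 then 1
  else if |x₁ - x₂| ≤ 0.4 then
    (phi x₁ * x₁ + phi x₂ * x₂) / (phi x₁ + phi x₂)
  else
    (Real.sqrt (phi x₁) * x₁ + Real.sqrt (phi x₂) * x₂)
      / (Real.sqrt (phi x₁) + Real.sqrt (phi x₂))

/-!
Fix the less-informed forecast `y`. If some line `v ↦ C + l * (y - v)` lies above the squared error
`v ↦ (fpre y v - v) ^ 2` on `[0, 1]`, then `C` bounds the relative loss of every martingale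
`M_{x,y,z}`, because the posterior averages to `y` and the linear term averages out. It remains to
find such a line for each `y`, with `C = (5 * √5 - 11) / 8`. The error vanishes at `v = 1`, so
`l ≤ C / (1 - y)`; for `y ≥ 2 / 3` this extreme slope works. For `|y - 1 / 2| ≤ 1 / 6` the slope
`5 / 64 * (y - 1 / 2) / (y * (1 - y))` works, and `y ≤ 1 / 3` follows by symmetry.

The value of `C` comes from forecasts further than `0.4` apart with `y ≥ 2 / 3`: there the claim
reduces to `u ^ 2 * (1 - u) ≤ 4 * C * (1 + u)` for `u = y - v`, whose optimal constant is
`4 * C = φ⁻¹ ^ 5`, attained at `u = φ⁻¹` with `φ` the golden ratio.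
Everywhere else there is room to replace `C` by the slightly smaller `0.02254`.
-/

open Set

section OrderedField

variable {K : Type*} [Field K] [LinearOrder K] [IsStrictOrderedRing K]

theorem sq_div_add_le {a b : K} (μ : K) (ha : 0 ≤ a) (hb : 0 < b) (hμ : -1 < μ) (hμ' : μ ≤ 1) :
    (a / (a + b)) ^ 2 ≤ a / ((1 + μ) * ((1 - μ) * a + 2 * b)) := by
  have h₁ : 0 < 1 + μ := by linarith
  have h₂ : 0 < (1 - μ) * a + 2 * b := by
    have := mul_nonneg (sub_nonneg.2 hμ') ha
    linarith
  rw [div_pow, div_le_div_iff₀ (by positivity) (mul_pos h₁ h₂)]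
  linear_combination mul_nonneg ha (sq_nonneg (μ * a - b))

-- As a function of `(a / b) ^ 2`, the right-hand side is the tangent line at `a / b = r`.
theorem sq_div_add_le_tangent {a b r : K} (ha : 0 ≤ a) (hb : 0 < b) (hr : 0 < r) :
    (a / (a + b)) ^ 2 ≤ ((a / b) ^ 2 + r ^ 3) / (1 + r) ^ 3 := by
  have h : 0 ≤ (a - r * b) ^ 2 * (a ^ 2 + (2 + 2 * r) * a * b + r * b ^ 2) := by positivity
  rw [div_pow, div_pow, div_add' _ _ _ (by positivity), div_div,
    div_le_div_iff₀ (by positivity) (by positivity)]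
  linear_combination h

theorem inv_weighted_mean_sub {a b : K} (x y : K) (ha : 0 < a) (hb : 0 < b) :
    (1 / a * x + 1 / b * y) / (1 / a + 1 / b) - y = (x - y) * (b / (b + a)) := by
  have : b + a ≠ 0 := by positivity
  field_simp
  ring

theorem two_point_mean_le_of_le_line {x y z gx gz C l : K} (hxy : x ≤ y) (hyz : y ≤ z)
    (hxz : x < z) (hx : gx ≤ C + l * (y - x)) (hz : gz ≤ C + l * (y - z)) :
    (z - y) / (z - x) * gx + (y - x) / (z - x) * gz ≤ C := by
  rw [div_mul_eq_mul_div, div_mul_eq_mul_div, ← add_div, div_le_iff₀ (sub_pos.2 hxz)]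
  linarith [mul_le_mul_of_nonneg_left hx (sub_nonneg.2 hyz),
    mul_le_mul_of_nonneg_left hz (sub_nonneg.2 hxy)]

theorem quadratic_nonneg_of_sq_le {a b c : K} (ha : 0 < a) (h : b ^ 2 ≤ a * c) (x : K) :
    0 ≤ a * x ^ 2 - 2 * b * x + c := by
  refine nonneg_of_mul_nonneg_right ?_ ha
  linarith [sq_nonneg (a * x - b)]

theorem pow_five_eq_of_sq_add_self {g : K} (hg : g ^ 2 + g = 1) : g ^ 5 = 5 * g - 3 := by
  linear_combination (g ^ 3 - g ^ 2 + 2 * g - 3) * hg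

-- Equality holds at `u = g`, where the cubic difference has a double root.
theorem sq_mul_one_sub_le_pow_five_mul {g u : K} (hg₀ : 0 ≤ g) (hg : g ^ 2 + g = 1) (hu : 0 ≤ u) :
    u ^ 2 * (1 - u) ≤ g ^ 5 * (1 + u) := by
  have hroot : 0 ≤ (u - g) ^ 2 * (u + g ^ 3) := by positivity
  have hg₃ : g ^ 3 = 2 * g - 1 := by linear_combination (g - 1) * hg
  rw [hg₃] at hroot
  rw [pow_five_eq_of_sq_add_self hg]
  linear_combination hroot + (2 * g - 3 - 3 * u) * hg

end OrderedField

/-- The variance `v(1-v)` of a Bernoulli variable with mean `v`, i.e. the reciprocal of the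
precision of the forecast `v`. -/
def bernoulliVar (v : ℝ) : ℝ := v * (1 - v)

theorem phi_eq_one_div_bernoulliVar (v : ℝ) : phi v = 1 / bernoulliVar v := rfl

theorem bernoulliVar_nonneg {v : ℝ} (hv : v ∈ Icc 0 1) : 0 ≤ bernoulliVar v :=
  mul_nonneg hv.1 (sub_nonneg.2 hv.2)

theorem bernoulliVar_pos {v : ℝ} (hv : v ∈ Ioo 0 1) : 0 < bernoulliVar v :=
  mul_pos hv.1 (sub_pos.2 hv.2)

theorem bernoulliVar_one_sub (v : ℝ) : bernoulliVar (1 - v) = bernoulliVar v := by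
  unfold bernoulliVar
  ring

/-- The regret guaranteed by the precision scheme; it is `φ⁻¹ ^ 5 / 4` for the golden ratio `φ`. -/
def regretBound : ℝ := (5 * Real.sqrt 5 - 11) / 8

theorem inv_goldenRatio_sq_add_self : Real.goldenRatio⁻¹ ^ 2 + Real.goldenRatio⁻¹ = 1 := by
  rw [Real.inv_goldenRatio]
  linear_combination Real.goldenConj_sq

theorem four_mul_regretBound : 4 * regretBound = Real.goldenRatio⁻¹ ^ 5 := by
  rw [pow_five_eq_of_sq_add_self inv_goldenRatio_sq_add_self, Real.inv_goldenRatio,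
    Real.goldenConj, regretBound]
  ring

theorem lt_regretBound : 0.02254 < regretBound := by
  have : 2.236064 < Real.sqrt 5 := Real.lt_sqrt_of_sq_lt (by norm_num)
  unfold regretBound
  linarith

section Scheme

variable {y v : ℝ}

theorem fpre_zero_right (hy : y ≠ 1) : fpre y 0 = 0 := by simp [fpre, hy]

theorem fpre_one_right (hy : y ≠ 0) : fpre y 1 = 1 := by simp [fpre, hy]

theorem fpre_of_mem_Ioo (hy : y ∈ Ioo 0 1) (hv : v ∈ Ioo 0 1) :
    fpre y v = if |y - v| ≤ 0.4 then (phi y * y + phi v * v) / (phi y + phi v)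
      else (√(phi y) * y + √(phi v) * v) / (√(phi y) + √(phi v)) := by
  simp only [fpre, hy.1.ne', hy.2.ne, hv.1.ne', hv.2.ne, false_and, or_self, if_false]

theorem fpre_sub_of_abs_le (hy : y ∈ Ioo 0 1) (hv : v ∈ Icc 0 1) (h : |y - v| ≤ 0.4) :
    fpre y v - v = (y - v) * (bernoulliVar v / (bernoulliVar v + bernoulliVar y)) := by
  rcases eq_endpoints_or_mem_Ioo_of_mem_Icc hv with rfl | rfl | hv
  · simp [fpre_zero_right hy.2.ne, bernoulliVar]
  · simp [fpre_one_right hy.1.ne', bernoulliVar]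
  · rw [fpre_of_mem_Ioo hy hv, if_pos h]
    exact inv_weighted_mean_sub _ _ (bernoulliVar_pos hy) (bernoulliVar_pos hv)

theorem fpre_sub_of_lt_abs (hy : y ∈ Ioo 0 1) (hv : v ∈ Icc 0 1) (h : 0.4 < |y - v|) :
    fpre y v - v = (y - v) * (√(bernoulliVar v) / (√(bernoulliVar v) + √(bernoulliVar y))) := by
  rcases eq_endpoints_or_mem_Ioo_of_mem_Icc hv with rfl | rfl | hv
  · simp [fpre_zero_right hy.2.ne, bernoulliVar]
  · simp [fpre_one_right hy.1.ne', bernoulliVar]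
  · rw [fpre_of_mem_Ioo hy hv, if_neg h.not_ge]
    simp only [phi_eq_one_div_bernoulliVar, Real.sqrt_div zero_le_one, Real.sqrt_one]
    exact inv_weighted_mean_sub _ _ (Real.sqrt_pos.2 (bernoulliVar_pos hy))
      (Real.sqrt_pos.2 (bernoulliVar_pos hv))

theorem fpre_one_sub_one_sub (hy : y ∈ Ioo 0 1) (hv : v ∈ Icc 0 1) :
    fpre (1 - y) (1 - v) = 1 - fpre y v := by
  have hy' : 1 - y ∈ Ioo (0 : ℝ) 1 := ⟨sub_pos.2 hy.2, sub_lt_self 1 hy.1⟩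
  have hv' : 1 - v ∈ Icc (0 : ℝ) 1 := ⟨sub_nonneg.2 hv.2, sub_le_self 1 hv.1⟩
  have hdist : |1 - y - (1 - v)| = |y - v| := by rw [sub_sub_sub_cancel_left, abs_sub_comm]
  rcases le_or_gt |y - v| 0.4 with h | h
  · have hr := fpre_sub_of_abs_le hy' hv' (hdist.trans_le h)
    rw [bernoulliVar_one_sub, bernoulliVar_one_sub] at hr
    linear_combination hr + fpre_sub_of_abs_le hy hv h
  · have hr := fpre_sub_of_lt_abs hy' hv' (h.trans_eq hdist.symm)
    rw [bernoulliVar_one_sub, bernoulliVar_one_sub] at hr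
    linear_combination hr + fpre_sub_of_lt_abs hy hv h

end Scheme

/-- The line of value `C` and slope `-l` at `y` lies above the squared error of the precision
scheme, as a function of the posterior `v` of the more-informed expert. -/
def IsErrorMajorant (y C l : ℝ) : Prop :=
  ∀ v ∈ Icc (0 : ℝ) 1, (fpre y v - v) ^ 2 ≤ C + l * (y - v)

section Majorant

variable {y v C C' l : ℝ}

theorem IsErrorMajorant.mono (h : IsErrorMajorant y C l) (hC : C ≤ C') :
    IsErrorMajorant y C' l :=
  fun v hv => (h v hv).trans (by gcongr)

theorem IsErrorMajorant.one_sub (hy : y ∈ Ioo 0 1) (h : IsErrorMajorant y C l) :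
    IsErrorMajorant (1 - y) C (-l) := by
  intro v hv
  have hv' : 1 - v ∈ Icc (0 : ℝ) 1 := ⟨sub_nonneg.2 hv.2, sub_le_self 1 hv.1⟩
  have hsymm := fpre_one_sub_one_sub hy hv'
  rw [sub_sub_cancel] at hsymm
  rw [hsymm]
  linarith [h (1 - v) hv']

theorem sq_sub_mul_bernoulliVar_near_le (hy : |y - 1 / 2| ≤ 1 / 6) (hv : |y - v| ≤ 0.4) :
    (y - v) ^ 2 * bernoulliVar v ≤
      4 * (0.02254 * bernoulliVar y + 5 / 64 * (y - 1 / 2) * (y - v)) := by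
  have hprod : |(y - 1 / 2) * (y - v)| ≤ 1 / 6 * 0.4 := by
    rw [abs_mul]
    gcongr
  have hsq : (y - 1 / 2) ^ 2 ≤ (1 / 6) ^ 2 := sq_le_sq' (abs_le.1 hy).1 (abs_le.1 hy).2
  unfold bernoulliVar
  linarith [sq_nonneg ((y - v) * (1 / 2 - v) - 1 / 8), (abs_le.1 hprod).1]

-- The numbers are such that the discriminant is nonpositive, although barely so near `d = 0.5`.
theorem far_quadratic_nonneg {d : ℝ} (hd : 0.4 ≤ |d|) (σ : ℝ) :
    0 ≤ (1.216 * d ^ 2 - 0.09232384) * σ ^ 2 - 2 * (d * (d ^ 2 - 0.16)) * σ +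
      (d ^ 4 - 0.304 * d ^ 2 + 0.02308096) := by
  obtain ⟨s, hs⟩ : ∃ s, s = d ^ 2 - 0.16 := ⟨_, rfl⟩
  have hs₀ : 0 ≤ s := by
    have : 0.4 ^ 2 ≤ d ^ 2 := by
      rw [← sq_abs d]
      gcongr
    linarith
  have hcubic : (s + 0.16) * s ^ 2 ≤
      (1.216 * s + 0.10223616) * (s ^ 2 + 0.016 * s + 0.00004096) := by
    linarith [mul_nonneg (by positivity : 0 ≤ 0.216 * s + 0.0005) (sq_nonneg (s - 0.0899)),
      sq_nonneg s]
  apply quadratic_nonneg_of_sq_le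
  · linarith
  · rw [hs] at hcubic
    linarith

-- `5 / 64` makes the linear coefficient of the quadratic vanish at `d = y - v = ±0.4`, where the
-- claim is nearly tight for `y = 1 / 2`; `0.6` is the ratio of standard deviations at that point.
theorem sq_sub_mul_bernoulliVar_far_le (h : 0.4 ≤ |y - v|) :
    (y - v) ^ 2 * (bernoulliVar v + 0.6 ^ 3 * bernoulliVar y) ≤
      (1 + 0.6) ^ 3 * (0.02254 * bernoulliVar y + 5 / 64 * (y - 1 / 2) * (y - v)) := by
  unfold bernoulliVar
  linarith [far_quadratic_nonneg h (y - 1 / 2)]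

theorem isErrorMajorant_of_abs_sub_half_le (hy : |y - 1 / 2| ≤ 1 / 6) :
    IsErrorMajorant y 0.02254 (5 / 64 * (y - 1 / 2) / bernoulliVar y) := by
  have hy' := abs_le.1 hy
  have hy₀₁ : y ∈ Ioo (0 : ℝ) 1 := ⟨by linarith, by linarith⟩
  have hVy := bernoulliVar_pos hy₀₁
  intro v hv
  have hVv := bernoulliVar_nonneg hv
  have hline : 0.02254 + 5 / 64 * (y - 1 / 2) / bernoulliVar y * (y - v) =
      (0.02254 * bernoulliVar y + 5 / 64 * (y - 1 / 2) * (y - v)) / bernoulliVar y := by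
    field_simp
  rw [hline]
  rcases le_or_gt |y - v| 0.4 with h | h
  · rw [fpre_sub_of_abs_le hy₀₁ hv h, mul_pow]
    refine (mul_le_mul_of_nonneg_left
      (sq_div_add_le 1 hVv hVy (by norm_num) le_rfl) (sq_nonneg _)).trans ?_
    rw [← mul_div_assoc, div_le_div_iff₀ (by linarith) hVy]
    linarith [mul_le_mul_of_nonneg_right (sq_sub_mul_bernoulliVar_near_le hy h) hVy.le]
  · rw [fpre_sub_of_lt_abs hy₀₁ hv h, mul_pow]
    refine (mul_le_mul_of_nonneg_left (sq_div_add_le_tangent (r := 0.6) (Real.sqrt_nonneg _)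
      (Real.sqrt_pos.2 hVy) (by norm_num)) (sq_nonneg _)).trans ?_
    rw [div_pow, Real.sq_sqrt hVv, Real.sq_sqrt hVy.le, div_add' _ _ _ hVy.ne', div_div,
      ← mul_div_assoc, div_le_div_iff₀ (by positivity) hVy]
    linarith [mul_le_mul_of_nonneg_right (sq_sub_mul_bernoulliVar_far_le h.le) hVy.le]

theorem sq_sub_mul_sq_one_sub_mul_le {e w : ℝ} (hw : 0 ≤ w) (hwe : w ≤ e) (he : e ≤ 1 / 3) :
    (e - w) ^ 2 * (1 - w) ^ 2 * w ≤
      0.02254 * ((1 - e) * (e * (1 - e) + 2 * (w * (1 - w)))) := by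
  have he₀ : 0 ≤ e := hw.trans hwe
  have hw₁ : 0 ≤ 1 - w := by linarith
  have hcubic : (e - w) ^ 2 * w ≤ 0.01 * (e + 3 * w) := calc
    (e - w) ^ 2 * w ≤ 0.09 * (e ^ 2 * (e + 3 * w)) := by
      linarith [mul_nonneg (sub_nonneg.2 hwe) (sq_nonneg (w - 0.29 * e)),
        mul_nonneg he₀ (sq_nonneg (w - 0.08 * e)), mul_nonneg he₀ (sq_nonneg e),
        mul_nonneg he₀ (sq_nonneg w)]
    _ ≤ 0.09 * ((1 / 3) ^ 2 * (e + 3 * w)) := by gcongr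
    _ = 0.01 * (e + 3 * w) := by ring
  calc
    (e - w) ^ 2 * (1 - w) ^ 2 * w = (e - w) ^ 2 * w * ((1 - w) * (1 - w)) := by ring
    _ ≤ 0.01 * (e + 3 * w) * ((1 - w) * 1) := by
      gcongr
      linarith
    _ ≤ 0.02254 * (2 / 3 * (e * (2 / 3 * (1 - w)) + 2 * (w * (1 - w)))) := by
      linarith [mul_nonneg he₀ hw₁, mul_nonneg hw hw₁]
    _ ≤ 0.02254 * ((1 - e) * (e * (1 - e) + 2 * (w * (1 - w)))) := by
      gcongr <;> linarith

theorem sq_mul_mul_le_of_sum_eq_one {v d e : ℝ} (hv : 0 ≤ v) (hd : 0 ≤ d) (he : 0 ≤ e)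
    (hd' : d ≤ 0.4) (hsum : v + d + e = 1) :
    d ^ 2 * v * e ≤ 0.02254 * (0.75 * (v * (d + e)) + 3 * (e * (d + v))) := by
  have hamgm : 19.5 * (d * v * e) ≤
      (v + d + e) * (0.75 * (v * (d + e)) + 3 * (e * (d + v))) := by
    linarith [mul_nonneg hd (sq_nonneg (v - 2 * e)), mul_nonneg he (sq_nonneg (v - d)),
      mul_nonneg hv (sq_nonneg (d - 2 * e)), mul_nonneg hv (sq_nonneg e),
      mul_nonneg he (sq_nonneg v)]
  rw [hsum, one_mul] at hamgm
  have hdve : 0 ≤ d * v * e := by positivity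
  linarith [mul_le_mul_of_nonneg_right hd' hdve]

theorem pow_four_sub_mul_le (hv : 0 ≤ v) (hvy : v ≤ y) (hy : y ≤ 1) :
    (y - v) ^ 4 * (v * (1 - y)) ≤ (4 * regretBound) ^ 2 * (y * (1 - v)) := by
  have hu : 0 ≤ y - v := sub_nonneg.2 hvy
  have hu₁ : 0 ≤ 1 - (y - v) := by linarith
  have hgold : (y - v) ^ 2 * (1 - (y - v)) ≤ 4 * regretBound * (1 + (y - v)) := by
    rw [four_mul_regretBound]
    exact sq_mul_one_sub_le_pow_five_mul (inv_nonneg.2 Real.goldenRatio_pos.le)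
      inv_goldenRatio_sq_add_self hu
  have hgold_sq := pow_le_pow_left₀ (mul_nonneg (sq_nonneg _) hu₁) hgold 2
  have hp₀ : 0 ≤ v * (1 - y) := mul_nonneg hv (sub_nonneg.2 hy)
  have hp : v * (1 - y) ≤ (1 - (y - v)) ^ 2 / 4 := by linarith [sq_nonneg (v - (1 - y))]
  have hsplit : y * (1 - v) = (y - v) + v * (1 - y) := by ring
  rw [hsplit]
  rcases le_total ((y - v) ^ 4) ((4 * regretBound) ^ 2) with h | h
  · linarith [mul_le_mul_of_nonneg_right h hp₀, mul_nonneg (sq_nonneg (4 * regretBound)) hu]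
  · linarith [mul_le_mul_of_nonneg_left hp (sub_nonneg.2 h)]

theorem sq_sub_mul_sqrt_bernoulliVar_le (hv : 0 ≤ v) (hvy : v ≤ y) (hy : y ≤ 1) :
    (y - v) ^ 2 * (1 - y) * √(bernoulliVar v) ≤
      4 * regretBound * (1 - v) * √(bernoulliVar y) := by
  have hC : 0 < regretBound := by linarith [lt_regretBound]
  have hy₁ : 0 ≤ 1 - y := sub_nonneg.2 hy
  have hv₁ : 0 ≤ 1 - v := by linarith
  refine (sq_le_sq₀ (by positivity) (by positivity)).1 ?_
  calc
    ((y - v) ^ 2 * (1 - y) * √(bernoulliVar v)) ^ 2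
      = (y - v) ^ 4 * (v * (1 - y)) * ((1 - y) * (1 - v)) := by
        rw [mul_pow, Real.sq_sqrt (bernoulliVar_nonneg ⟨hv, by linarith⟩), bernoulliVar]
        ring
    _ ≤ (4 * regretBound) ^ 2 * (y * (1 - v)) * ((1 - y) * (1 - v)) :=
        mul_le_mul_of_nonneg_right (pow_four_sub_mul_le hv hvy hy) (mul_nonneg hy₁ hv₁)
    _ = (4 * regretBound * (1 - v) * √(bernoulliVar y)) ^ 2 := by
        rw [mul_pow _ √(bernoulliVar y), Real.sq_sqrt (bernoulliVar_nonneg ⟨hv.trans hvy, hy⟩),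
          bernoulliVar]
        ring

theorem sq_error_far_left_le (hv : 0 ≤ v) (hvy : v ≤ y) (hy : y ∈ Ioo 0 1) :
    (y - v) ^ 2 * (√(bernoulliVar v) / (√(bernoulliVar v) + √(bernoulliVar y))) ^ 2 ≤
      regretBound * (1 - v) / (1 - y) := by
  have hb : 0 < √(bernoulliVar y) := Real.sqrt_pos.2 (bernoulliVar_pos hy)
  refine (mul_le_mul_of_nonneg_left
    (sq_div_add_le 1 (Real.sqrt_nonneg _) hb (by norm_num) le_rfl) (sq_nonneg _)).trans ?_
  rw [← mul_div_assoc, div_le_div_iff₀ (by linarith) (sub_pos.2 hy.2)]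
  linarith [sq_sub_mul_sqrt_bernoulliVar_le hv hvy hy.2.le]

theorem sq_error_near_left_le (hv : 0 ≤ v) (hvy : v ≤ y) (hy : y ∈ Ioo 0 1) (h : y - v ≤ 0.4) :
    (y - v) ^ 2 * (bernoulliVar v / (bernoulliVar v + bernoulliVar y)) ^ 2 ≤
      0.02254 * (1 - v) / (1 - y) := by
  have hy₁ : 0 < 1 - y := sub_pos.2 hy.2
  have hv₁ : 0 ≤ 1 - v := by linarith
  have hVv : 0 ≤ bernoulliVar v := bernoulliVar_nonneg ⟨hv, sub_nonneg.1 hv₁⟩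
  have hVy : 0 < bernoulliVar y := bernoulliVar_pos hy
  refine (mul_le_mul_of_nonneg_left
    (sq_div_add_le (1 / 2) hVv hVy (by norm_num) (by norm_num)) (sq_nonneg _)).trans ?_
  rw [← mul_div_assoc, div_le_div_iff₀ (by linarith) hy₁]
  have hpoly := sq_mul_mul_le_of_sum_eq_one hv (sub_nonneg.2 hvy) hy₁.le h (by ring)
  unfold bernoulliVar
  linarith [mul_le_mul_of_nonneg_right hpoly hv₁]

theorem sq_error_near_right_le (hy : y ∈ Ico (2 / 3) 1) (hyv : y ≤ v) (hv : v ≤ 1) :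
    (y - v) ^ 2 * (bernoulliVar v / (bernoulliVar v + bernoulliVar y)) ^ 2 ≤
      0.02254 * (1 - v) / (1 - y) := by
  have hy₀ : 0 < y := by linarith [hy.1]
  have hy₁ : 0 < 1 - y := sub_pos.2 hy.2
  have hv₁ : 0 ≤ 1 - v := sub_nonneg.2 hv
  have hVv : 0 ≤ bernoulliVar v := bernoulliVar_nonneg ⟨hy₀.le.trans hyv, hv⟩
  have hVy : 0 < bernoulliVar y := bernoulliVar_pos ⟨hy₀, hy.2⟩
  have hshare : (bernoulliVar v / (bernoulliVar v + bernoulliVar y)) ^ 2 ≤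
      bernoulliVar v ^ 2 / (bernoulliVar y * (bernoulliVar y + 2 * bernoulliVar v)) := by
    rw [div_pow]
    gcongr
    linarith [sq_nonneg (bernoulliVar v)]
  refine (mul_le_mul_of_nonneg_left hshare (sq_nonneg _)).trans ?_
  rw [← mul_div_assoc, div_le_div_iff₀ (by positivity) hy₁]
  have hpoly := sq_sub_mul_sq_one_sub_mul_le hv₁ (by linarith : 1 - v ≤ 1 - y) (by linarith [hy.1])
  unfold bernoulliVar
  linarith [mul_le_mul_of_nonneg_right hpoly (mul_nonneg hv₁ hy₁.le)]

theorem isErrorMajorant_of_two_thirds_le (hy : y ∈ Ico (2 / 3) 1) :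
    IsErrorMajorant y regretBound (regretBound / (1 - y)) := by
  have hy₀₁ : y ∈ Ioo (0 : ℝ) 1 := ⟨by linarith [hy.1], hy.2⟩
  have hy₁ : 0 < 1 - y := sub_pos.2 hy.2
  intro v hv
  have hline : regretBound + regretBound / (1 - y) * (y - v) =
      regretBound * (1 - v) / (1 - y) := by
    field_simp
    ring
  have hrational : 0.02254 * (1 - v) / (1 - y) ≤ regretBound * (1 - v) / (1 - y) := by
    have := sub_nonneg.2 hv.2
    gcongr
    exact lt_regretBound.le
  rw [hline]
  rcases le_or_gt |y - v| 0.4 with h | h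
  · rw [fpre_sub_of_abs_le hy₀₁ hv h, mul_pow]
    refine le_trans ?_ hrational
    rcases le_total v y with hvy | hyv
    · exact sq_error_near_left_le hv.1 hvy hy₀₁ (abs_le.1 h).2
    · exact sq_error_near_right_le hy hyv hv.2
  · have hvy : v ≤ y := by
      rcases lt_abs.1 h with h | h <;> linarith [hy.1, hv.2]
    rw [fpre_sub_of_lt_abs hy₀₁ hv h, mul_pow]
    exact sq_error_far_left_le hv.1 hvy hy₀₁

theorem exists_isErrorMajorant (hy : y ∈ Ioo 0 1) : ∃ l, IsErrorMajorant y regretBound l := by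
  rcases le_or_gt |y - 1 / 2| (1 / 6) with hmid | hfar
  · exact ⟨_, (isErrorMajorant_of_abs_sub_half_le hmid).mono lt_regretBound.le⟩
  rcases lt_abs.1 hfar with hhigh | hlow
  · exact ⟨_, isErrorMajorant_of_two_thirds_le ⟨by linarith, hy.2⟩⟩
  · have hhigh := isErrorMajorant_of_two_thirds_le (y := 1 - y) ⟨by linarith, by linarith [hy.1]⟩
    have hreflect := hhigh.one_sub ⟨sub_pos.2 hy.2, sub_lt_self 1 hy.1⟩
    rw [sub_sub_cancel] at hreflect
    exact ⟨_, hreflect⟩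

end Majorant

/-- the relative loss of the precision scheme on every extreme Blackwell-ordered
martingale `M_{x,y,z}` is at most `(5√5 - 11)/8`. -/
theorem stmt_4 (x y z : ℝ) (h0 : 0 ≤ x) (hxy : x ≤ y) (hyz : y ≤ z) (h1 : z ≤ 1)
    (hxz : x < z) :
    ((z - y)/(z - x)) * (fpre y x - x)^2 + ((y - x)/(z - x)) * (fpre y z - z)^2
      ≤ (5 * Real.sqrt 5 - 11) / 8 := by
  have hC : 0 ≤ regretBound := by linarith [lt_regretBound]
  change _ ≤ regretBound
  rcases (h0.trans hxy).eq_or_lt with rfl | hy₀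
  · obtain rfl : x = 0 := le_antisymm hxy h0
    simpa [fpre] using hC
  rcases (hyz.trans h1).eq_or_lt with rfl | hy₁
  · obtain rfl : z = 1 := le_antisymm h1 hyz
    simpa [fpre] using hC
  obtain ⟨l, hl⟩ := exists_isErrorMajorant ⟨hy₀, hy₁⟩
  exact two_point_mean_le_of_le_line hxy hyz hxz (hl x ⟨h0, hxz.le.trans h1⟩)
    (hl z ⟨h0.trans hxz.le, h1⟩)
end
end

section
/- Define g(μ, x₁, x₂) = x₁x₂(1−μ) / (x₁x₂(1−μ) + (1−x₁)(1−x₂)μ) and the average-prior scheme f_avg(x₁,x₂) = g((x₁+x₂)/2, x₁, x₂). For all real numbers μ, y₁, z₁, y₂, z₂ with 0 < μ < 1 and 0 ≤ y_i ≤ μ ≤ z_i ≤ 1 and y_i < z_i for i = 1, 2, the quantity Σ_{v₁ ∈ {y₁,z₁}} Σ_{v₂ ∈ {y₂,z₂}} p₁(v₁)·p₂(v₂)·( (1−v₁)(1−v₂)/(1−μ) + v₁v₂/μ )·( g(μ, v₁, v₂) − f_avg(v₁, v₂) )² is at most 0.026, where p_i(y_i) = (z_i − μ)/(z_i − y_i)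 and p_i(z_i) = (μ − y_i)/(z_i − y_i), and any summand whose factor ((1−v₁)(1−v₂)/(1−μ) + v₁v₂/μ)·p₁(v₁)·p₂(v₂) is zero is taken to be zero. -/
noncomputable section

/-- Bayesian pooling formula for two conditionally independent experts with prior `μ`. -/
def gB (μ x₁ x₂ : ℝ) : ℝ :=
  x₁ * x₂ * (1 - μ) / (x₁ * x₂ * (1 - μ) + (1 - x₁) * (1 - x₂) * μ)

/-- The average-prior aggregation scheme `f_avg(x₁,x₂) = g((x₁+x₂)/2, x₁, x₂)`
(with the natural value `1` at the singular point `(1,1)`). -/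
def favg (x₁ x₂ : ℝ) : ℝ :=
  if x₁ = 1 ∧ x₂ = 1 then 1 else gB ((x₁ + x₂)/2) x₁ x₂

/-!
Under independent `x` and `y` of mean `μ`, each function
`13/500 + α (x + y - 2μ) + ω (x - μ)(y - μ) - q (x - μ)(y - μ)(x + y - 2μ)` has mean `13/500`. Hence
it suffices to find `α`, `ω`, `q` for which it dominates the weighted loss on the whole unit square.
Exchanging the two states maps `(μ, x, y)` to `(1 - μ, 1 - x, 1 - y)`, so we may take `μ ≤ 1/2`, and
there one explicit choice works for `μ ≤ 1/5` and another one for `μ ≥ 1/5`.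

After clearing denominators, domination says that four integer polynomials are nonnegative on the
unit cube. A form that is homogeneous in each of several pairs of variables is nonnegative on the
orthant if its coefficients are. If they are not, halve the orthant along one pair, pull the form
back to both halves by a linear substitution, and repeat; the kernel evaluates this recursion.
-/

/-- Integer polynomials in `n` variables as nested coefficient lists, the outermost list belonging
to variable `0`. A list of length `d + 1` is also read as a binary form of degree `d`, see
`eval`. -/
def NestedPoly : ℕ → Type
  | 0 => ℤ
  | n + 1 => List (NestedPoly n)

namespace NestedPoly

/-- The integer underlying a polynomial without variables. -/
def toInt (f : NestedPoly 0) : ℤ := f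

/-- An integer as a polynomial without variables. -/
def ofInt (k : ℤ) : NestedPoly 0 := k

/-- The coefficients with respect to variable `0`. -/
def coeffs {n : ℕ} (f : NestedPoly (n + 1)) : List (NestedPoly n) := f

/-- The polynomial with given coefficients with respect to variable `0`. -/
def ofCoeffs {n : ℕ} (l : List (NestedPoly n)) : NestedPoly (n + 1) := l

@[simp] theorem coeffs_ofCoeffs {n : ℕ} (l : List (NestedPoly n)) : coeffs (ofCoeffs l) = l := rfl

/-! ### Binary forms as coefficient lists -/

section Lists

variable {α β : Type} (add : α → α → α)

-- The kernel runs these operations millions of times; it reduces bare recursors several times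
-- faster than the compiled form of structural recursion.

/-- Integer addition. -/
def addInt (a b : ℤ) : ℤ :=
  Int.rec
    (fun m => Int.rec (fun k => Int.ofNat (Nat.add m k)) (fun k => Int.subNatNat m k.succ) b)
    (fun m => Int.rec (fun k => Int.subNatNat k m.succ)
      (fun k => Int.negSucc (Nat.add m k).succ) b) a

/-- Entrywise sum of two lists; the longer tail is kept. -/
def addLists (l : List α) : List α → List α :=
  List.rec (fun m => m) (fun a as ih m => List.rec (a :: as) (fun b bs _ => add a b :: ih bs) m) l

/-- Convolution product of two lists. -/
def mulLists (zero : α) (mul : α → α → α) (l m : List α) : List α :=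
  List.rec [] (fun a _ ih => addLists add (m.map (mul a)) (zero :: ih)) l

/-- The coefficients of `c * u ^ (d + 1) + (u + 2 * v) * F`, where `l` are those of the binary form
`F` of degree `d`. -/
def consShear (l : List α) : α → List α :=
  List.rec (fun c => [c]) (fun a _ ih c => add c a :: ih (add a a)) l

/-- The substitution `v ↦ u + 2 * v` in a binary form. -/
def shear (l : List α) : List α :=
  List.rec [] (fun c _ ih => consShear add ih c) l

/-- The binary form `∑ φ (l i) * u ^ (l.length - 1 - i) * v ^ i`. -/
def homEval (φ : α → ℝ) (u v : ℝ) : List α → ℝ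
  | [] => 0
  | a :: l => φ a * u ^ l.length + v * homEval φ u v l

variable {add} {P : α → Prop}

@[simp] theorem addInt_eq (a b : ℤ) : addInt a b = a + b := by
  cases a <;> cases b <;> rfl

@[simp] theorem addLists_nil_left (m : List α) : addLists add [] m = m := rfl

@[simp] theorem addLists_nil_right (l : List α) : addLists add l [] = l := by cases l <;> rfl

@[simp] theorem addLists_cons_cons (a b : α) (l m : List α) :
    addLists add (a :: l) (b :: m) = add a b :: addLists add l m := rfl

@[simp] theorem mulLists_nil (zero : α) (mul : α → α → α) (m : List α) :
    mulLists add zero mul [] m = [] := rfl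

@[simp] theorem mulLists_cons (zero : α) (mul : α → α → α) (a : α) (l m : List α) :
    mulLists add zero mul (a :: l) m =
      addLists add (m.map (mul a)) (zero :: mulLists add zero mul l m) := rfl

@[simp] theorem consShear_nil (c : α) : consShear add [] c = [c] := rfl

@[simp] theorem consShear_cons (c a : α) (l : List α) :
    consShear add (a :: l) c = add c a :: consShear add l (add a a) := rfl

@[simp] theorem shear_nil : shear add [] = [] := rfl

@[simp] theorem shear_cons (c : α) (l : List α) :
    shear add (c :: l) = consShear add (shear add l) c := rfl

@[simp] theorem length_consShear (l : List α) (c : α) :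
    (consShear add l c).length = l.length + 1 := by
  induction l generalizing c with
  | nil => rfl
  | cons a l ih => simp [ih]

@[simp] theorem length_shear (l : List α) : (shear add l).length = l.length := by
  induction l with
  | nil => rfl
  | cons a l ih => simp [ih]

theorem length_addLists (l m : List α) :
    (addLists add l m).length = max l.length m.length := by
  induction l generalizing m with
  | nil => simp
  | cons a l ih => cases m <;> simp [ih]

theorem forall_mem_addLists (hP : ∀ a b, P a → P b → P (add a b)) {l m : List α}
    (hl : ∀ a ∈ l, P a) (hm : ∀ a ∈ m, P a) : ∀ a ∈ addLists add l m, P a := by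
  induction l generalizing m with
  | nil => simpa using hm
  | cons a l ih =>
    cases m with
    | nil => simpa using hl
    | cons b m =>
      simp only [List.forall_mem_cons] at hl hm
      simpa using ⟨hP a b hl.1 hm.1, ih hl.2 hm.2⟩

theorem forall_mem_consShear (hP : ∀ a b, P a → P b → P (add a b)) {l : List α} {c : α}
    (hc : P c) (hl : ∀ a ∈ l, P a) : ∀ a ∈ consShear add l c, P a := by
  induction l generalizing c with
  | nil => simpa using hc
  | cons a l ih =>
    simp only [List.forall_mem_cons] at hl
    simpa using ⟨hP c a hc hl.1, ih (hP a a hl.1 hl.1) hl.2⟩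

theorem forall_mem_shear (hP : ∀ a b, P a → P b → P (add a b)) {l : List α}
    (hl : ∀ a ∈ l, P a) : ∀ a ∈ shear add l, P a := by
  induction l with
  | nil => simp
  | cons c l ih =>
    simp only [List.forall_mem_cons] at hl
    exact forall_mem_consShear hP hl.1 (ih hl.2)

theorem homEval_congr {φ ψ : α → ℝ} {u v : ℝ} {l : List α} (h : ∀ a ∈ l, φ a = ψ a) :
    homEval φ u v l = homEval ψ u v l := by
  induction l with
  | nil => rfl
  | cons a l ih =>
    simp only [List.forall_mem_cons] at h
    simp only [homEval, h.1, ih h.2]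

theorem homEval_nonneg {φ : α → ℝ} {u v : ℝ} {l : List α} (hu : 0 ≤ u) (hv : 0 ≤ v)
    (h : ∀ a ∈ l, 0 ≤ φ a) : 0 ≤ homEval φ u v l := by
  induction l with
  | nil => exact le_rfl
  | cons a l ih =>
    simp only [List.forall_mem_cons] at h
    exact add_nonneg (mul_nonneg h.1 (pow_nonneg hu _)) (mul_nonneg hv (ih h.2))

theorem homEval_map (φ : β → ℝ) (g : α → β) (u v : ℝ) (l : List α) :
    homEval φ u v (l.map g) = homEval (fun a => φ (g a)) u v l := by
  induction l with
  | nil => rfl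
  | cons a l ih => simp only [List.map_cons, homEval, List.length_map, ih]

theorem homEval_append (φ : α → ℝ) (u v : ℝ) (l m : List α) :
    homEval φ u v (l ++ m) = homEval φ u v l * u ^ m.length + v ^ l.length * homEval φ u v m := by
  induction l with
  | nil => simp [homEval]
  | cons a l ih =>
    simp only [List.cons_append, homEval, List.length_append, List.length_cons, ih]
    ring

theorem homEval_reverse (φ : α → ℝ) (u v : ℝ) (l : List α) :
    homEval φ u v l.reverse = homEval φ v u l := by
  induction l with
  | nil => rfl
  | cons a l ih =>
    simp only [List.reverse_cons, homEval_append, homEval, ih, List.length_reverse,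
      List.length_cons, List.length_nil]
    ring

theorem homEval_addLists {φ : α → ℝ} {u v : ℝ} {l m : List α}
    (hu : u = 1 ∨ l.length = m.length)
    (hφ : ∀ a ∈ l, ∀ b ∈ m, φ (add a b) = φ a + φ b) :
    homEval φ u v (addLists add l m) = homEval φ u v l + homEval φ u v m := by
  induction l generalizing m with
  | nil => simp [homEval]
  | cons a l ih =>
    cases m with
    | nil => simp [homEval]
    | cons b m =>
      simp only [List.forall_mem_cons, List.length_cons, Nat.add_right_cancel_iff] at hφ hu
      have hpow : u ^ (addLists add l m).length = u ^ l.length ∧ u ^ l.length = u ^ m.length := by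
        rcases hu with rfl | hu
        · simp
        · simp [length_addLists, hu]
      rw [addLists_cons_cons, homEval, homEval, homEval, hφ.1.1, hpow.1, ← hpow.2,
        ih hu fun a ha b hb => (hφ.2 a ha).2 b hb]
      ring

theorem homEval_mulLists {φ : α → ℝ} {zero : α} {mul : α → α → α} {v : ℝ}
    (hadd : ∀ a b, φ (add a b) = φ a + φ b) (hzero : φ zero = 0)
    (hmul : ∀ a b, φ (mul a b) = φ a * φ b) (l m : List α) :
    homEval φ 1 v (mulLists add zero mul l m) = homEval φ 1 v l * homEval φ 1 v m := by
  have hscale (a : α) : homEval φ 1 v (m.map (mul a)) = φ a * homEval φ 1 v m := by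
    induction m with
    | nil => simp [homEval]
    | cons b m ih =>
      simp only [List.map_cons, homEval, hmul, ih, one_pow]
      ring
  induction l with
  | nil => simp [homEval]
  | cons a l ih =>
    rw [mulLists_cons, homEval_addLists (Or.inl rfl) fun a _ b _ => hadd a b, hscale, homEval,
      homEval, hzero, ih, one_pow]
    ring

theorem homEval_consShear (hP : ∀ a b, P a → P b → P (add a b)) {φ : α → ℝ}
    (hφ : ∀ a b, P a → P b → φ (add a b) = φ a + φ b) {u v : ℝ} {l : List α} {c : α}
    (hc : P c) (hl : ∀ a ∈ l, P a) :
    homEval φ u v (consShear add l c) = φ c * u ^ l.length + (u + 2 * v) * homEval φ u v l := by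
  induction l generalizing c with
  | nil => simp [homEval]
  | cons a l ih =>
    simp only [List.forall_mem_cons] at hl
    rw [consShear_cons, homEval, ih (hP a a hl.1 hl.1) hl.2, hφ c a hc hl.1, hφ a a hl.1 hl.1,
      length_consShear, homEval, List.length_cons]
    ring

theorem homEval_shear (hP : ∀ a b, P a → P b → P (add a b)) {φ : α → ℝ}
    (hφ : ∀ a b, P a → P b → φ (add a b) = φ a + φ b) {u v : ℝ} {l : List α}
    (hl : ∀ a ∈ l, P a) : homEval φ u v (shear add l) = homEval φ u (u + 2 * v) l := by
  induction l with
  | nil => rfl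
  | cons c l ih =>
    simp only [List.forall_mem_cons] at hl
    rw [shear_cons, homEval_consShear hP hφ hl.1 (forall_mem_shear hP hl.2), ih hl.2,
      length_shear, homEval]

end Lists

/-! ### Polynomials and the subdivision test -/

/-- The constant polynomial `k`. -/
def C : (n : ℕ) → ℤ → NestedPoly n
  | 0, k => ofInt k
  | n + 1, k => ofCoeffs [C n k]

/-- The `i`-th variable, for `i < n`. -/
def X : (n : ℕ) → ℕ → NestedPoly n
  | 0, _ => ofInt 0
  | n + 1, 0 => ofCoeffs [C n 0, C n 1]
  | n + 1, i + 1 => ofCoeffs [X n i]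

/-- Addition of polynomials. -/
def add (n : ℕ) : NestedPoly n → NestedPoly n → NestedPoly n :=
  Nat.rec (motive := fun n => NestedPoly n → NestedPoly n → NestedPoly n)
    addInt (fun _ add => addLists add) n

@[simp] theorem toInt_add (f g : NestedPoly 0) : toInt (add 0 f g) = f.toInt + g.toInt :=
  addInt_eq f g

@[simp] theorem coeffs_add {n : ℕ} (f g : NestedPoly (n + 1)) :
    coeffs (add (n + 1) f g) = addLists (add n) f.coeffs g.coeffs := rfl

/-- Multiplication of polynomials. -/
def mul : (n : ℕ) → NestedPoly n → NestedPoly n → NestedPoly n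
  | 0, f, g => ofInt (f.toInt * g.toInt)
  | n + 1, f, g => ofCoeffs (mulLists (add n) (C n 0) (mul n) f.coeffs g.coeffs)

instance (n : ℕ) : Add (NestedPoly n) := ⟨add n⟩
instance (n : ℕ) : Mul (NestedPoly n) := ⟨mul n⟩
instance (n : ℕ) : Sub (NestedPoly n) := ⟨fun p q => p + C n (-1) * q⟩

/-- The zero polynomial written with `d` coefficients in each variable; adding it to `p` makes `p`
a multihomogeneous form without changing the values of `p`. -/
def zeros (d : ℕ) : (n : ℕ) → NestedPoly n
  | 0 => ofInt 0
  | n + 1 => ofCoeffs (List.replicate d (zeros d n))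

/-- Every coefficient list of `f` has length `d`. -/
def isFull (d : ℕ) : (n : ℕ) → NestedPoly n → Bool
  | 0, _ => true
  | n + 1, f => f.coeffs.length == d && f.coeffs.all (isFull d n)

/-- All coefficients of `f` are nonnegative. -/
def isNonneg : (n : ℕ) → NestedPoly n → Bool
  | 0, f => Int.rec (fun _ => true) (fun _ => false) f.toInt
  | n + 1, f => f.coeffs.all (isNonneg n)

/-- The form `f` after the substitution `(u, v) ↦ (u, u + 2 * v)` (`upper = true`) or
`(u, v) ↦ (v + 2 * u, v)` (`upper = false`) in the variables of index `i`. These two maps carry the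
quadrant `u, v ≥ 0` onto its halves `u ≤ v` and `v ≤ u`. -/
def half : (n i : ℕ) → (upper : Bool) → NestedPoly n → NestedPoly n
  | 0, _, _, f => f
  | n + 1, 0, true, f => ofCoeffs (shear (add n) f.coeffs)
  | n + 1, 0, false, f => ofCoeffs (shear (add n) f.coeffs.reverse).reverse
  | n + 1, i + 1, b, f => ofCoeffs (f.coeffs.map (half n i b))

/-- Nonnegativity test on the orthant: subdivide, cycling through the indices from `i` on, until all
coefficients are nonnegative. The first argument after `n` bounds the depth. -/
def check (n : ℕ) : ℕ → ℕ → NestedPoly n → Bool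
  | 0, _, f => isNonneg n f
  | k + 1, i, f => isNonneg n f ||
      (check n k ((i + 1) % n) (half n i false f) && check n k ((i + 1) % n) (half n i true f))

/-- The value of `f` as a multihomogeneous form, with `z i` the pair of variables of index `i`.
The list `[c₀, …, c_d]` is read as `∑ c_j * u ^ (d - j) * v ^ j`, so that polynomial evaluation is
the case where all first components are `1`. -/
def eval : (n : ℕ) → (ℕ → ℝ × ℝ) → NestedPoly n → ℝ
  | 0, _, f => f.toInt
  | n + 1, z, f => homEval (eval n fun i => z (i + 1)) (z 0).1 (z 0).2 f.coeffs

variable {n d : ℕ} {z : ℕ → ℝ × ℝ}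

theorem isFull_succ {f : NestedPoly (n + 1)} :
    isFull d (n + 1) f ↔ f.coeffs.length = d ∧ ∀ a ∈ f.coeffs, isFull d n a := by
  simp [isFull]

theorem isFull_add {p q : NestedPoly n} (hp : isFull d n p) (hq : isFull d n q) :
    isFull d n (add n p q) := by
  induction n with
  | zero => rfl
  | succ n ih =>
    rw [isFull_succ] at *
    exact ⟨by simp [length_addLists, hp.1, hq.1],
      forall_mem_addLists (fun _ _ => ih) hp.2 hq.2⟩

theorem eval_add_of_isFull {p q : NestedPoly n}
    (h : (∀ i, (z i).1 = 1) ∨ isFull d n p ∧ isFull d n q) :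
    eval n z (add n p q) = eval n z p + eval n z q := by
  induction n generalizing z with
  | zero => simp [eval]
  | succ n ih =>
    simp only [isFull_succ] at h
    refine homEval_addLists (h.imp (· 0) fun h => h.1.1.trans h.2.1.symm) fun a ha b hb => ih ?_
    exact h.imp (fun h i => h (i + 1)) fun h => ⟨h.1.2 a ha, h.2.2 b hb⟩

theorem isFull_half {f : NestedPoly n} (i : ℕ) (b : Bool) (hf : isFull d n f) :
    isFull d n (half n i b f) := by
  induction n generalizing i with
  | zero => rfl
  | succ n ih =>
    rw [isFull_succ] at *
    rcases i with _ | i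
    · cases b
      · have hmem : ∀ a ∈ shear (add n) f.coeffs.reverse, isFull d n a :=
          forall_mem_shear (fun _ _ => isFull_add) (by simpa using hf.2)
        exact ⟨by simp [half, hf.1], by simpa [half] using hmem⟩
      · exact ⟨by simp [half, hf.1], forall_mem_shear (fun _ _ => isFull_add) hf.2⟩
    · exact ⟨by simp [half, hf.1], by simpa [half] using fun a ha => ih i (hf.2 a ha)⟩

/-- The substitution on pairs of variables that `half` performs. -/
def stretch (upper : Bool) (w : ℝ × ℝ) : ℝ × ℝ :=
  if upper then (w.1, w.1 + 2 * w.2) else (w.2 + 2 * w.1, w.2)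

theorem eval_half {f : NestedPoly n} (i : ℕ) (b : Bool) (hf : isFull d n f) :
    eval n z (half n i b f) = eval n (Function.update z i (stretch b (z i))) f := by
  induction n generalizing z i with
  | zero => rfl
  | succ n ih =>
    rw [isFull_succ] at hf
    rcases i with _ | i
    · have hadd (p q : NestedPoly n) (hp : isFull d n p) (hq : isFull d n q) :
          eval n (fun i => z (i + 1)) (add n p q) = _ := eval_add_of_isFull (Or.inr ⟨hp, hq⟩)
      cases b
      · simp only [half, eval, coeffs_ofCoeffs, homEval_reverse]
        rw [homEval_shear (fun _ _ => isFull_add) hadd (by simpa using hf.2), homEval_reverse]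
        simp [stretch]
      · simp only [half, eval, coeffs_ofCoeffs]
        rw [homEval_shear (fun _ _ => isFull_add) hadd hf.2]
        simp [stretch]
    · simp only [half, eval, coeffs_ofCoeffs, homEval_map]
      rw [homEval_congr fun a ha => ih i (hf.2 a ha)]
      have hshift : (fun j => Function.update z (i + 1) (stretch b (z (i + 1))) (j + 1)) =
          Function.update (fun j => z (j + 1)) i (stretch b (z (i + 1))) := by
        ext1 j
        simp [Function.update_apply]
      rw [hshift, Function.update_of_ne (Nat.succ_ne_zero i).symm]

theorem eval_nonneg_of_isNonneg {f : NestedPoly n} (hz : 0 ≤ z) (hf : isNonneg n f) :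
    0 ≤ eval n z f := by
  induction n generalizing z with
  | zero =>
    simp only [eval, isNonneg] at hf ⊢
    rcases hk : f.toInt with k | k <;> simp_all
  | succ n ih =>
    simp only [isNonneg, List.all_eq_true] at hf
    exact homEval_nonneg (hz 0).1 (hz 0).2 fun a ha => ih (fun i => hz (i + 1)) (hf a ha)

theorem exists_stretch_eq {w : ℝ × ℝ} (hw : 0 ≤ w) {b : Bool}
    (hb : if b then w.1 ≤ w.2 else w.2 ≤ w.1) : ∃ w', 0 ≤ w' ∧ stretch b w' = w := by
  obtain ⟨u, v⟩ := w
  obtain ⟨hu, hv⟩ : 0 ≤ u ∧ 0 ≤ v := hw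
  cases b <;> simp only [Bool.false_eq_true, if_true, if_false] at hb
  · exact ⟨((u - v) / 2, v), ⟨div_nonneg (sub_nonneg.2 hb) zero_le_two, hv⟩,
      by simp [stretch]; ring⟩
  · exact ⟨(u, (v - u) / 2), ⟨hu, div_nonneg (sub_nonneg.2 hb) zero_le_two⟩,
      by simp [stretch]; ring⟩

theorem eval_nonneg_of_half {f : NestedPoly n} {i : ℕ} {b : Bool} (hf : isFull d n f)
    (hz : 0 ≤ z i) (hb : if b then (z i).1 ≤ (z i).2 else (z i).2 ≤ (z i).1)
    (h : ∀ w, 0 ≤ w → 0 ≤ eval n (Function.update z i w) (half n i b f)) : 0 ≤ eval n z f := by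
  obtain ⟨w, hw, hwz⟩ := exists_stretch_eq hz hb
  simpa [eval_half i b hf, hwz] using h w hw

theorem update_nonneg (hz : 0 ≤ z) {i : ℕ} {w : ℝ × ℝ} (hw : 0 ≤ w) :
    0 ≤ Function.update z i w :=
  le_update_iff.2 ⟨hw, fun j _ => hz j⟩

theorem eval_nonneg_of_check {k i : ℕ} {f : NestedPoly n} (hf : isFull d n f)
    (h : check n k i f) (hz : 0 ≤ z) : 0 ≤ eval n z f := by
  induction k generalizing i f z with
  | zero => exact eval_nonneg_of_isNonneg hz h
  | succ k ih =>
    simp only [check, Bool.or_eq_true, Bool.and_eq_true] at h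
    rcases h with h | ⟨h_lower, h_upper⟩
    · exact eval_nonneg_of_isNonneg hz h
    rcases le_total (z i).2 (z i).1 with hi | hi
    · exact eval_nonneg_of_half (b := false) hf (hz i) hi fun w hw =>
        ih (isFull_half i _ hf) h_lower (update_nonneg hz hw)
    · exact eval_nonneg_of_half (b := true) hf (hz i) hi fun w hw =>
        ih (isFull_half i _ hf) h_upper (update_nonneg hz hw)

/-- The form `f` after `(u, v) ↦ (v + 2 * u, v)` in all variables: its values on the orthant are
those of `f` where `v ≤ u`, which is where the dehomogenized variables lie in `[0, 1]`. -/
def lowerHalves : (n : ℕ) → NestedPoly n → NestedPoly n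
  | 0, f => f
  | n + 1, f => half (n + 1) 0 false (ofCoeffs (f.coeffs.map (lowerHalves n)))

theorem isFull_map_coeffs {f : NestedPoly (n + 1)} {g : NestedPoly n → NestedPoly n}
    (hf : isFull d (n + 1) f) (hg : ∀ a, isFull d n a → isFull d n (g a)) :
    isFull d (n + 1) (ofCoeffs (f.coeffs.map g)) := by
  rw [isFull_succ] at *
  exact ⟨by simp [hf.1], by simpa using fun a ha => hg a (hf.2 a ha)⟩

theorem isFull_lowerHalves {f : NestedPoly n} (hf : isFull d n f) :
    isFull d n (lowerHalves n f) := by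
  induction n with
  | zero => rfl
  | succ n ih => exact isFull_half 0 false (isFull_map_coeffs hf fun _ => ih)

theorem eval_lowerHalves {f : NestedPoly n} (hf : isFull d n f) :
    eval n z (lowerHalves n f) = eval n (fun i => stretch false (z i)) f := by
  induction n generalizing z with
  | zero => rfl
  | succ n ih =>
    rw [lowerHalves, eval_half 0 false (isFull_map_coeffs hf fun _ => isFull_lowerHalves)]
    simp only [eval, coeffs_ofCoeffs, homEval_map, Function.update_self, Function.update_of_ne,
      ne_eq, Nat.succ_ne_zero, not_false_eq_true]
    exact homEval_congr fun a ha => ih ((isFull_succ.1 hf).2 a ha)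

/-- The value of the polynomial `p` at the point `t`. -/
def evalAt (t : ℕ → ℝ) (p : NestedPoly n) : ℝ := eval n (fun i => (1, t i)) p

variable {t : ℕ → ℝ} (p q : NestedPoly n)

@[simp] theorem evalAt_add : evalAt t (p + q) = evalAt t p + evalAt t q :=
  eval_add_of_isFull (d := 0) (Or.inl fun _ => rfl)

@[simp] theorem evalAt_C (k : ℤ) : evalAt t (C n k) = k := by
  induction n generalizing t with
  | zero => rfl
  | succ n ih => simpa [evalAt, eval, C, homEval] using ih (t := fun i => t (i + 1))

@[simp] theorem evalAt_mul : evalAt t (p * q) = evalAt t p * evalAt t q := by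
  induction n generalizing t with
  | zero => exact Int.cast_mul _ _
  | succ n ih =>
    exact homEval_mulLists (φ := evalAt fun i => t (i + 1)) evalAt_add (by simp) (ih · ·) _ _

@[simp] theorem evalAt_sub : evalAt t (p - q) = evalAt t p - evalAt t q := by
  change evalAt t (p + C n (-1) * q) = _
  simp [sub_eq_add_neg]

theorem evalAt_X {i : ℕ} (hi : i < n) : evalAt t (X n i) = t i := by
  induction n generalizing t i with
  | zero => cases hi
  | succ n ih =>
    have hC (k : ℤ) : eval n (fun i => (1, t (i + 1))) (C n k) = k := evalAt_C k
    cases i with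
    | zero => simp [evalAt, eval, X, homEval, hC]
    | succ i =>
      simpa [evalAt, eval, X, homEval] using
        ih (t := fun i => t (i + 1)) (Nat.lt_of_succ_lt_succ hi)

theorem evalAt_zeros : evalAt t (zeros d n) = 0 := by
  induction n generalizing t with
  | zero => exact Int.cast_zero
  | succ n ih =>
    have hz : eval n (fun i => (1, t (i + 1))) (zeros d n) = 0 := ih
    have hrep (k : ℕ) : homEval (eval n fun i => (1, t (i + 1))) 1 (t 0)
        (List.replicate k (zeros d n)) = 0 := by
      induction k with
      | zero => rfl
      | succ k ih => rw [List.replicate_succ, homEval, hz, ih, zero_mul, mul_zero, add_zero]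
    exact hrep d

/-- The form whose values on the orthant are the values of `p` on the unit cube, all degrees being
less than `d`. -/
def cubeForm (d : ℕ) (p : NestedPoly n) : NestedPoly n := lowerHalves n (p + zeros d n)

/-- The arguments at which `cubeForm d p` takes the value of `p` at `t`. -/
def cubePoint (t : ℕ → ℝ) (i : ℕ) : ℝ × ℝ := ((1 - t i) / 2, t i)

theorem cubePoint_nonneg (ht : ∀ i, t i ∈ Set.Icc 0 1) : 0 ≤ cubePoint t := fun i =>
  ⟨div_nonneg (sub_nonneg.2 (ht i).2) zero_le_two, (ht i).1⟩

variable {p}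

theorem isFull_cubeForm (hp : isFull d n (p + zeros d n)) : isFull d n (cubeForm d p) :=
  isFull_lowerHalves hp

theorem eval_cubeForm (hp : isFull d n (p + zeros d n)) :
    eval n (cubePoint t) (cubeForm d p) = evalAt t p := by
  have hstretch (i : ℕ) : stretch false (cubePoint t i) = (1, t i) := by
    simp [stretch, cubePoint]; ring
  rw [cubeForm, eval_lowerHalves hp]
  simp only [hstretch]
  exact (evalAt_add p (zeros d n)).trans (by rw [evalAt_zeros, add_zero])

/-- Nonnegativity test on the unit cube for a polynomial with all degrees less than `d`, with up to
`k` successive halvings. -/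
def checkCube (d k : ℕ) (p : NestedPoly n) : Bool :=
  isFull d n (p + zeros d n) && check n k 0 (cubeForm d p)

/-- Variant of `checkCube` for polynomials symmetric in the variables `0` and `1`: it suffices that
variable `0` lies in the lower half, or both variables in the upper half. -/
def checkCubeSymm (d k : ℕ) (p : NestedPoly n) : Bool :=
  isFull d n (p + zeros d n) && (check n k 1 (half n 0 false (cubeForm d p)) &&
    check n k 2 (half n 1 true (half n 0 true (cubeForm d p))))

theorem evalAt_nonneg_of_checkCube {k : ℕ} (h : checkCube d k p) (ht : ∀ i, t i ∈ Set.Icc 0 1) :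
    0 ≤ evalAt t p := by
  rw [checkCube, Bool.and_eq_true] at h
  rw [← eval_cubeForm h.1]
  exact eval_nonneg_of_check (isFull_cubeForm h.1) h.2 (cubePoint_nonneg ht)

theorem evalAt_nonneg_of_checkCubeSymm {k : ℕ} (h : checkCubeSymm d k p)
    (hp : evalAt (t ∘ Equiv.swap 0 1) p = evalAt t p) (ht : ∀ i, t i ∈ Set.Icc 0 1) :
    0 ≤ evalAt t p := by
  simp only [checkCubeSymm, Bool.and_eq_true] at h
  obtain ⟨h_full, h_lower, h_upper⟩ := h
  have hf := isFull_cubeForm h_full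
  have lower {t : ℕ → ℝ} (ht : ∀ i, t i ∈ Set.Icc 0 1) (h0 : t 0 ≤ (1 - t 0) / 2) :
      0 ≤ evalAt t p := by
    rw [← eval_cubeForm h_full]
    exact eval_nonneg_of_half (b := false) hf (cubePoint_nonneg ht 0) h0 fun w hw =>
      eval_nonneg_of_check (isFull_half 0 _ hf) h_lower (update_nonneg (cubePoint_nonneg ht) hw)
  rcases le_total (t 0) ((1 - t 0) / 2) with h0 | h0
  · exact lower ht h0
  rcases le_total (t 1) ((1 - t 1) / 2) with h1 | h1
  · rw [← hp]
    exact lower (fun i => ht _) (by simpa using h1)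
  · rw [← eval_cubeForm h_full]
    refine eval_nonneg_of_half (b := true) hf (cubePoint_nonneg ht 0) h0 fun w hw =>
      eval_nonneg_of_half (i := 1) (b := true) (isFull_half 0 _ hf)
        (by simpa using cubePoint_nonneg ht 1) (by simpa [cubePoint] using h1) fun w' hw' => ?_
    exact eval_nonneg_of_check (isFull_half 1 _ (isFull_half 0 _ hf)) h_upper
      (update_nonneg (update_nonneg (cubePoint_nonneg ht) hw) hw')

end NestedPoly

open NestedPoly

/-! ### The weighted loss -/

section Loss

/-- Squared gap between the omniscient posterior and `favg` at the posteriors `x`, `y`, weighted by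
the density of the joint law of the posteriors with respect to the product of its marginals. -/
def weightedLoss (μ x y : ℝ) : ℝ :=
  ((1 - x) * (1 - y) / (1 - μ) + x * y / μ) * (gB μ x y - favg x y) ^ 2

/-- The common denominator of `gB μ x y` and of the joint density of the posteriors. -/
def jointMass (μ x y : ℝ) : ℝ := x * y * (1 - μ) + (1 - x) * (1 - y) * μ

/-- Twice the denominator of `favg x y`. -/
def spread (x y : ℝ) : ℝ := x * (1 - x) + y * (1 - y)

variable {μ x y : ℝ}

theorem spread_pos_or_corner (hx : x ∈ Set.Icc 0 1) (hy : y ∈ Set.Icc 0 1) :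
    0 < spread x y ∨ (x = 0 ∨ x = 1) ∧ (y = 0 ∨ y = 1) := by
  have endpoint {t : ℝ} (ht : t ∈ Set.Icc 0 1) : 0 < t * (1 - t) ∨ t = 0 ∨ t = 1 := by
    rcases (mul_nonneg ht.1 (sub_nonneg.2 ht.2)).lt_or_eq with h | h
    · exact Or.inl h
    · exact Or.inr ((mul_eq_zero.1 h.symm).imp_right fun h => (sub_eq_zero.1 h).symm)
  have hx' := mul_nonneg hx.1 (sub_nonneg.2 hx.2)
  have hy' := mul_nonneg hy.1 (sub_nonneg.2 hy.2)
  rcases endpoint hx with h | h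
  · exact Or.inl (add_pos_of_pos_of_nonneg h hy')
  · exact (endpoint hy).imp (add_pos_of_nonneg_of_pos hx') (⟨h, ·⟩)

theorem jointMass_nonneg (hμ : μ ∈ Set.Icc 0 1) (hx : x ∈ Set.Icc 0 1) (hy : y ∈ Set.Icc 0 1) :
    0 ≤ jointMass μ x y :=
  add_nonneg (mul_nonneg (mul_nonneg hx.1 hy.1) (sub_nonneg.2 hμ.2))
    (mul_nonneg (mul_nonneg (sub_nonneg.2 hx.2) (sub_nonneg.2 hy.2)) hμ.1)

theorem jointMass_pos (hμ : μ ∈ Set.Ioo 0 1) (hx : x ∈ Set.Icc 0 1) (hy : y ∈ Set.Icc 0 1)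
    (hs : 0 < spread x y) : 0 < jointMass μ x y := by
  obtain ⟨hμ0, hμ1⟩ := hμ
  refine (jointMass_nonneg ⟨hμ0.le, hμ1.le⟩ hx hy).lt_of_ne fun h => hs.ne ?_
  have hsum := (add_eq_zero_iff_of_nonneg
    (mul_nonneg (mul_nonneg hx.1 hy.1) (sub_nonneg.2 hμ1.le))
    (mul_nonneg (mul_nonneg (sub_nonneg.2 hx.2) (sub_nonneg.2 hy.2)) hμ0.le)).1 h.symm
  have h_zero : x = 0 ∨ y = 0 := by simpa [(sub_pos.2 hμ1).ne'] using hsum.1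
  have h_one : 1 - x = 0 ∨ 1 - y = 0 := by simpa [hμ0.ne'] using hsum.2
  unfold spread
  rcases h_zero with h0 | h0 <;> rcases h_one with h1 | h1 <;>
    first | (exfalso; linarith) | simp [h0, h1]

theorem gB_sub_favg (hμ : μ ∈ Set.Ioo 0 1) (hx : x ∈ Set.Icc 0 1) (hy : y ∈ Set.Icc 0 1)
    (hs : 0 < spread x y) :
    gB μ x y - favg x y =
      x * y * ((1 - x) * (1 - y)) * (x + y - 2 * μ) / (jointMass μ x y * spread x y) := by
  have hne : ¬ (x = 1 ∧ y = 1) := by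
    rintro ⟨rfl, rfl⟩
    simp [spread] at hs
  have hN := jointMass_pos hμ hx hy hs
  have hfavg : x * y * (1 - (x + y) / 2) + (1 - x) * (1 - y) * ((x + y) / 2) = spread x y / 2 := by
    unfold spread; ring
  rw [favg, if_neg hne, gB, gB, hfavg, ← jointMass,
    div_sub_div _ _ hN.ne' (half_pos hs).ne', div_eq_div_iff (by positivity) (by positivity)]
  unfold jointMass spread
  ring

-- At the corners both sides vanish, the right-hand one by division by zero.
theorem weightedLoss_eq (hμ : μ ∈ Set.Ioo 0 1) (hx : x ∈ Set.Icc 0 1) (hy : y ∈ Set.Icc 0 1) :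
    weightedLoss μ x y = (x * y * ((1 - x) * (1 - y)) * (x + y - 2 * μ)) ^ 2 /
      (μ * (1 - μ) * jointMass μ x y * spread x y ^ 2) := by
  have hμ' : 0 < 1 - μ := sub_pos.2 hμ.2
  have hμ0 := hμ.1
  rcases spread_pos_or_corner hx hy with hs | ⟨rfl | rfl, rfl | rfl⟩
  · have hN := jointMass_pos hμ hx hy hs
    have hdensity : (1 - x) * (1 - y) / (1 - μ) + x * y / μ = jointMass μ x y / (μ * (1 - μ)) := by
      unfold jointMass; field_simp; ring
    rw [weightedLoss, gB_sub_favg hμ hx hy hs, hdensity]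
    field_simp
  · simp [weightedLoss, gB, favg]
  · simp [weightedLoss, spread]
  · simp [weightedLoss, spread]
  · simp [weightedLoss, gB, favg, hμ'.ne']

theorem weightedLoss_flip (hμ : μ ∈ Set.Ioo 0 1) (hx : x ∈ Set.Icc 0 1) (hy : y ∈ Set.Icc 0 1) :
    weightedLoss (1 - μ) (1 - x) (1 - y) = weightedLoss μ x y := by
  rw [weightedLoss_eq hμ hx hy,
    weightedLoss_eq (Set.Ioo.one_sub_mem hμ) (Set.Icc.one_sub_mem hx) (Set.Icc.one_sub_mem hy)]
  unfold jointMass spread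
  ring_nf

end Loss

/-! ### Dual certificates -/

section Certificate

/-- The dual function: its mean under independent `x` and `y` of mean `μ` is the claimed bound. -/
def dualBound (α ω q μ x y : ℝ) : ℝ :=
  13 / 500 + α * (x + y - 2 * μ) + ω * ((x - μ) * (y - μ)) -
    q * ((x - μ) * (y - μ) * (x + y - 2 * μ))

/-- The coefficients `α`, `ω`, `q` certify the bound `13 / 500` for the prior `μ`. -/
def IsDualCertificate (α ω q μ : ℝ) : Prop :=
  ∀ x ∈ Set.Icc (0 : ℝ) 1, ∀ y ∈ Set.Icc (0 : ℝ) 1, weightedLoss μ x y ≤ dualBound α ω q μ x y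

/-- Numerator of `13 / 500 * T / μ ^ 2 - weightedLoss μ x y`. -/
def margin (μ x y T : ℝ) : ℝ :=
  13 * (1 - μ) * jointMass μ x y * spread x y ^ 2 * T -
    500 * μ * (x * y * ((1 - x) * (1 - y)) * (x + y - 2 * μ)) ^ 2

variable {α ω q μ x y : ℝ}

theorem IsDualCertificate.flip (hμ : μ ∈ Set.Ioo 0 1) (h : IsDualCertificate α ω q μ) :
    IsDualCertificate (-α) ω (-q) (1 - μ) := fun x hx y hy => by
  have hbound : dualBound (-α) ω (-q) (1 - μ) x y = dualBound α ω q μ (1 - x) (1 - y) := by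
    unfold dualBound; ring
  have hx' := Set.Icc.one_sub_mem hx
  have hy' := Set.Icc.one_sub_mem hy
  simpa only [← weightedLoss_flip hμ hx' hy', sub_sub_cancel, hbound] using h _ hx' _ hy'

theorem weightedLoss_le_of_margin_nonneg {T : ℝ} (hμ : μ ∈ Set.Ioo 0 1) (hx : x ∈ Set.Icc 0 1)
    (hy : y ∈ Set.Icc 0 1) (hcorner : (x = 0 ∨ x = 1) → (y = 0 ∨ y = 1) → 0 ≤ T)
    (h : 0 ≤ margin μ x y T) : weightedLoss μ x y ≤ 13 / 500 * T / μ ^ 2 := by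
  have hμ0 := hμ.1
  have hμ' : 0 < 1 - μ := sub_pos.2 hμ.2
  rw [weightedLoss_eq hμ hx hy]
  rcases spread_pos_or_corner hx hy with hs | ⟨hx', hy'⟩
  · have hN := jointMass_pos hμ hx hy hs
    rw [div_le_div_iff₀ (by positivity) (by positivity)]
    unfold margin at h
    linear_combination μ / 500 * h
  · have hT := hcorner hx' hy'
    have hs : spread x y = 0 := by
      rcases hx' with rfl | rfl <;> rcases hy' with rfl | rfl <;> simp [spread]
    rw [hs, zero_pow two_ne_zero, mul_zero, div_zero]
    positivity

end Certificate

/-- The dual function used for `μ ≤ 1 / 5`, times `500 / 13 * μ ^ 2`. The coefficient `17 / 50` was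
found numerically. -/
def smallT (μ x y : ℝ) : ℝ := x * y - 17 / 50 * (x + y - μ) * ((x - μ) * (y - μ))

/-- The dual function used for `1 / 5 ≤ μ ≤ 1 / 2`, times `500 / 13 * μ ^ 2`. The coefficients were
found numerically. -/
def largeT (μ x y : ℝ) : ℝ :=
  μ ^ 2 + 10 * μ ^ 2 * (1 - μ) * (1 - 2 * μ) * (x + y - 2 * μ) + 9 / 10 * ((x - μ) * (y - μ)) -
    7 / 5 * μ * ((x - μ) * (y - μ)) * (x + y - 2 * μ)

/-- A triple of reals as a point at which a polynomial in three variables can be evaluated. -/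
def cubeVars (a b c : ℝ) : ℕ → ℝ
  | 0 => a
  | 1 => b
  | _ => c

theorem cubeVars_mem {a b c : ℝ} (ha : a ∈ Set.Icc 0 1) (hb : b ∈ Set.Icc 0 1)
    (hc : c ∈ Set.Icc 0 1) : ∀ i, cubeVars a b c i ∈ Set.Icc (0 : ℝ) 1
  | 0 => ha
  | 1 => hb
  | _ + 2 => hc

theorem cubeVars_comp_swap (a b c : ℝ) : cubeVars a b c ∘ Equiv.swap 0 1 = cubeVars b a c := by
  ext i
  rcases i with _ | _ | i
  · simp [cubeVars]
  · simp [cubeVars]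
  · simp [cubeVars, Equiv.swap_apply_of_ne_of_ne]

/-- The margin of `smallT` at `x = μ * a`, `y = μ * b` up to a positive factor, as a polynomial in
`b`, `a` and `M = 5 * μ`. -/
def lowPoly : NestedPoly 3 :=
  let b := X 3 0; let a := X 3 1; let M := X 3 2; let m := C 3 5 - M
  let A := C 3 5 - M * a; let B := C 3 5 - M * b; let s := a * A + b * B
  let w := M * (a * b) * (A * B) * (a + b - C 3 2)
  C 3 13 * m * (m * M * (a * b) + A * B) *
    (C 3 250 * (a * b) - C 3 17 * M * (a - C 3 1) * (b - C 3 1) * (a + b - C 3 1)) * (s * s) -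
    C 3 25000 * (w * w)

/-- The margin of `smallT` at `x = μ * a`, `y = μ + (1 - μ) * b` up to a positive factor, as a
polynomial in `b`, `a` and `M = 5 * μ`. -/
def mixedPoly : NestedPoly 3 :=
  let b := X 3 0; let a := X 3 1; let M := X 3 2; let m := C 3 5 - M
  let A := C 3 5 - M * a; let Y := M + m * b; let b' := C 3 1 - b
  let s := M * a * A + m * Y * b'
  let w := a * Y * A * b' * (m * b - M * (C 3 1 - a))
  C 3 13 * (a * Y + A * b') * (C 3 250 * a * Y + C 3 17 * m * (C 3 1 - a) * b * (M * a + m * b)) *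
    (s * s) - C 3 25000 * M * (w * w)

/-- The margin of `smallT` at `x = μ + (1 - μ) * a`, `y = μ + (1 - μ) * b` up to a positive factor,
as a polynomial in `b`, `a` and `M = 5 * μ`. -/
def highPoly : NestedPoly 3 :=
  let b := X 3 0; let a := X 3 1; let M := X 3 2; let m := C 3 5 - M
  let x := M + m * a; let y := M + m * b; let a' := C 3 1 - a; let b' := C 3 1 - b
  let s := x * a' + y * b'
  let w := x * y * a' * b' * (a + b) * m
  C 3 13 * (x * y + M * m * a' * b') * (C 3 250 * x * y - C 3 17 * m * m * a * b * (x + y - M)) *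
    (s * s) - C 3 25000 * M * (w * w)

/-- The margin of `largeT` up to a positive factor, as a polynomial in `y`, `x` and
`(10 * μ - 2) / 3`. -/
def centralPoly : NestedPoly 3 :=
  let e := C 3 10; let y := e * X 3 0; let x := e * X 3 1; let μ := C 3 2 + C 3 3 * X 3 2
  let x' := e - x; let y' := e - y; let δ := x + y - C 3 2 * μ; let E := (x - μ) * (y - μ)
  let s := x * x' + y * y'; let w := x * y * (x' * y') * δ
  C 3 13 * (e - μ) * (x * y * (e - μ) + x' * y' * μ) * (s * s) *
    (C 3 10000 * (μ * μ) + C 3 100 * (μ * μ) * (e - μ) * (e - C 3 2 * μ) * δ + C 3 9000 * E -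
      C 3 140 * μ * E * δ) - C 3 500000 * μ * (w * w)

theorem checkCubeSymm_lowPoly : checkCubeSymm 8 20 lowPoly := by
  decide +kernel

theorem checkCube_mixedPoly : checkCube 8 20 mixedPoly := by
  decide +kernel

theorem checkCubeSymm_highPoly : checkCubeSymm 8 20 highPoly := by
  decide +kernel

theorem checkCubeSymm_centralPoly : checkCubeSymm 8 20 centralPoly := by
  decide +kernel

section Margin

variable {μ a b x y : ℝ}

theorem margin_smallT_comm (μ x y : ℝ) :
    margin μ x y (smallT μ x y) = margin μ y x (smallT μ y x) := by
  unfold margin smallT jointMass spread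
  ring

theorem margin_largeT_comm (μ x y : ℝ) :
    margin μ x y (largeT μ x y) = margin μ y x (largeT μ y x) := by
  unfold margin largeT jointMass spread
  ring

theorem margin_smallT_low_eq (μ a b : ℝ) :
    margin μ (μ * a) (μ * b) (smallT μ (μ * a) (μ * b)) =
      μ ^ 5 / 781250 * evalAt (cubeVars b a (5 * μ)) lowPoly := by
  simp only [margin, smallT, jointMass, spread, lowPoly, evalAt_add, evalAt_sub, evalAt_mul,
    evalAt_C, evalAt_X, cubeVars, Nat.reduceLT]
  push_cast
  ring

theorem margin_smallT_mixed_eq (μ a b : ℝ) :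
    margin μ (μ * a) (μ + (1 - μ) * b) (smallT μ (μ * a) (μ + (1 - μ) * b)) =
      μ ^ 2 * (1 - μ) ^ 2 / 3906250 * evalAt (cubeVars b a (5 * μ)) mixedPoly := by
  obtain ⟨y, hy⟩ : ∃ y, y = μ + (1 - μ) * b := ⟨_, rfl⟩
  have hy' : 1 - y = (1 - μ) * (1 - b) := by linear_combination -hy
  have hyb : y - μ = (1 - μ) * b := by linear_combination hy
  have hy5 : 5 * μ + (5 - 5 * μ) * b = 5 * y := by linear_combination -5 * hy
  have hm5 : 5 - 5 * μ = 5 * (1 - μ) := by ring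
  have hxy : μ * a + y - μ = μ * a + (1 - μ) * b := by linear_combination hy
  have hxa : μ * a - μ = -μ * (1 - a) := by ring
  have hsum : μ * a + y - 2 * μ = (1 - μ) * b - μ * (1 - a) := by linear_combination hy
  rw [← hy]
  simp only [margin, smallT, jointMass, spread, mixedPoly, evalAt_add, evalAt_sub, evalAt_mul,
    evalAt_C, evalAt_X, cubeVars, Nat.reduceLT]
  push_cast
  rw [hxy, hy', hyb, hxa, hy5, hsum, hm5]
  generalize 1 - μ = m, 1 - a = a', 1 - b = b'
  ring

theorem margin_smallT_high_eq (μ a b : ℝ) :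
    margin μ (μ + (1 - μ) * a) (μ + (1 - μ) * b)
        (smallT μ (μ + (1 - μ) * a) (μ + (1 - μ) * b)) =
      (1 - μ) ^ 4 / 3906250 * evalAt (cubeVars b a (5 * μ)) highPoly := by
  obtain ⟨x, hx⟩ : ∃ x, x = μ + (1 - μ) * a := ⟨_, rfl⟩
  obtain ⟨y, hy⟩ : ∃ y, y = μ + (1 - μ) * b := ⟨_, rfl⟩
  have hx' : 1 - x = (1 - μ) * (1 - a) := by linear_combination -hx
  have hy' : 1 - y = (1 - μ) * (1 - b) := by linear_combination -hy
  have hxa : x - μ = (1 - μ) * a := by linear_combination hx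
  have hyb : y - μ = (1 - μ) * b := by linear_combination hy
  have hx5 : 5 * μ + (5 - 5 * μ) * a = 5 * x := by linear_combination -5 * hx
  have hy5 : 5 * μ + (5 - 5 * μ) * b = 5 * y := by linear_combination -5 * hy
  have hm5 : 5 - 5 * μ = 5 * (1 - μ) := by ring
  have hsum : x + y - 2 * μ = (1 - μ) * (a + b) := by linear_combination hx + hy
  rw [← hx, ← hy]
  simp only [margin, smallT, jointMass, spread, highPoly, evalAt_add, evalAt_sub, evalAt_mul,
    evalAt_C, evalAt_X, cubeVars, Nat.reduceLT]
  push_cast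
  rw [hx', hy', hxa, hyb, hx5, hy5, hsum, hm5]
  generalize 1 - μ = m, 1 - a = a', 1 - b = b'
  ring

theorem margin_largeT_eq (μ x y : ℝ) :
    margin μ x y (largeT μ x y) =
      1 / 10 ^ 14 * evalAt (cubeVars y x ((10 * μ - 2) / 3)) centralPoly := by
  have hμ : 2 + 3 * ((10 * μ - 2) / 3) = 10 * μ := by ring
  simp only [margin, largeT, jointMass, spread, centralPoly, evalAt_add, evalAt_sub, evalAt_mul,
    evalAt_C, evalAt_X, cubeVars, Nat.reduceLT]
  push_cast
  rw [hμ]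
  ring

theorem margin_smallT_low_nonneg (hμ : μ ∈ Set.Ioc 0 (1 / 5)) (ha : a ∈ Set.Icc 0 1)
    (hb : b ∈ Set.Icc 0 1) : 0 ≤ margin μ (μ * a) (μ * b) (smallT μ (μ * a) (μ * b)) := by
  have hμ0 := hμ.1
  have hM : 5 * μ ∈ Set.Icc (0 : ℝ) 1 := ⟨by linarith, by linarith [hμ.2]⟩
  have hscale : 0 < μ ^ 5 / 781250 := by positivity
  have hsymm : evalAt (cubeVars a b (5 * μ)) lowPoly = evalAt (cubeVars b a (5 * μ)) lowPoly :=
    mul_left_cancel₀ hscale.ne' (by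
      rw [← margin_smallT_low_eq, ← margin_smallT_low_eq, margin_smallT_comm])
  rw [margin_smallT_low_eq]
  exact mul_nonneg hscale.le (evalAt_nonneg_of_checkCubeSymm checkCubeSymm_lowPoly
    (by rwa [cubeVars_comp_swap]) (cubeVars_mem hb ha hM))

theorem margin_smallT_mixed_nonneg (hμ : μ ∈ Set.Ioc 0 (1 / 5)) (ha : a ∈ Set.Icc 0 1)
    (hb : b ∈ Set.Icc 0 1) :
    0 ≤ margin μ (μ * a) (μ + (1 - μ) * b) (smallT μ (μ * a) (μ + (1 - μ) * b)) := by
  have hM : 5 * μ ∈ Set.Icc (0 : ℝ) 1 := ⟨by linarith [hμ.1], by linarith [hμ.2]⟩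
  rw [margin_smallT_mixed_eq]
  exact mul_nonneg (by positivity)
    (evalAt_nonneg_of_checkCube checkCube_mixedPoly (cubeVars_mem hb ha hM))

theorem margin_smallT_high_nonneg (hμ : μ ∈ Set.Ioc 0 (1 / 5)) (ha : a ∈ Set.Icc 0 1)
    (hb : b ∈ Set.Icc 0 1) :
    0 ≤ margin μ (μ + (1 - μ) * a) (μ + (1 - μ) * b)
      (smallT μ (μ + (1 - μ) * a) (μ + (1 - μ) * b)) := by
  have hM : 5 * μ ∈ Set.Icc (0 : ℝ) 1 := ⟨by linarith [hμ.1], by linarith [hμ.2]⟩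
  have hμ' : 0 < 1 - μ := by linarith [hμ.2]
  have hscale : 0 < (1 - μ) ^ 4 / 3906250 := by positivity
  have hsymm : evalAt (cubeVars a b (5 * μ)) highPoly = evalAt (cubeVars b a (5 * μ)) highPoly :=
    mul_left_cancel₀ hscale.ne' (by
      rw [← margin_smallT_high_eq, ← margin_smallT_high_eq, margin_smallT_comm])
  rw [margin_smallT_high_eq]
  exact mul_nonneg hscale.le (evalAt_nonneg_of_checkCubeSymm checkCubeSymm_highPoly
    (by rwa [cubeVars_comp_swap]) (cubeVars_mem hb ha hM))

theorem margin_largeT_nonneg (hμ : μ ∈ Set.Icc (1 / 5) (1 / 2)) (hx : x ∈ Set.Icc 0 1)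
    (hy : y ∈ Set.Icc 0 1) : 0 ≤ margin μ x y (largeT μ x y) := by
  have hM : (10 * μ - 2) / 3 ∈ Set.Icc (0 : ℝ) 1 := ⟨by linarith [hμ.1], by linarith [hμ.2]⟩
  have hscale : (0 : ℝ) < 1 / 10 ^ 14 := by positivity
  have hsymm : evalAt (cubeVars x y ((10 * μ - 2) / 3)) centralPoly =
      evalAt (cubeVars y x ((10 * μ - 2) / 3)) centralPoly :=
    mul_left_cancel₀ hscale.ne' (by
      rw [← margin_largeT_eq, ← margin_largeT_eq, margin_largeT_comm])
  rw [margin_largeT_eq]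
  exact mul_nonneg hscale.le (evalAt_nonneg_of_checkCubeSymm checkCubeSymm_centralPoly
    (by rwa [cubeVars_comp_swap]) (cubeVars_mem hy hx hM))

theorem exists_eq_mul_or_eq_add_mul (hμ : μ ∈ Set.Ioo 0 1) (hx : x ∈ Set.Icc 0 1) :
    ∃ a ∈ Set.Icc (0 : ℝ) 1, x = μ * a ∨ x = μ + (1 - μ) * a := by
  have hμ' : 0 < 1 - μ := sub_pos.2 hμ.2
  rcases le_total x μ with h | h
  · exact ⟨x / μ, ⟨div_nonneg hx.1 hμ.1.le, (div_le_one hμ.1).2 h⟩,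
      Or.inl (mul_div_cancel₀ x hμ.1.ne').symm⟩
  · refine ⟨(x - μ) / (1 - μ), ⟨div_nonneg (sub_nonneg.2 h) hμ'.le, ?_⟩, Or.inr ?_⟩
    · exact (div_le_one hμ').2 (sub_le_sub_right hx.2 μ)
    · rw [mul_div_cancel₀ _ hμ'.ne', add_sub_cancel]

theorem margin_smallT_nonneg (hμ : μ ∈ Set.Ioc 0 (1 / 5)) (hx : x ∈ Set.Icc 0 1)
    (hy : y ∈ Set.Icc 0 1) : 0 ≤ margin μ x y (smallT μ x y) := by
  have hμ1 : μ ∈ Set.Ioo 0 1 := ⟨hμ.1, hμ.2.trans_lt (by norm_num)⟩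
  obtain ⟨a, ha, rfl | rfl⟩ := exists_eq_mul_or_eq_add_mul hμ1 hx <;>
    obtain ⟨b, hb, rfl | rfl⟩ := exists_eq_mul_or_eq_add_mul hμ1 hy
  · exact margin_smallT_low_nonneg hμ ha hb
  · exact margin_smallT_mixed_nonneg hμ ha hb
  · rw [margin_smallT_comm]
    exact margin_smallT_mixed_nonneg hμ hb ha
  · exact margin_smallT_high_nonneg hμ ha hb

theorem smallT_corner_nonneg (hμ : μ ∈ Set.Icc 0 (1 / 5)) (hx : x = 0 ∨ x = 1)
    (hy : y = 0 ∨ y = 1) : 0 ≤ smallT μ x y := by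
  obtain ⟨hμ0, hμ1⟩ := hμ
  have hμ3 := pow_nonneg hμ0 3
  have hμ2 := mul_nonneg hμ0 (sq_nonneg (1 - μ))
  unfold smallT
  rcases hx with rfl | rfl <;> rcases hy with rfl | rfl <;> nlinarith

theorem largeT_corner_nonneg (hμ : μ ∈ Set.Icc (1 / 5) (1 / 2)) (hx : x = 0 ∨ x = 1)
    (hy : y = 0 ∨ y = 1) : 0 ≤ largeT μ x y := by
  have hμ0 : 0 ≤ μ := le_trans (by norm_num) hμ.1
  have h_lower := sub_nonneg.2 hμ.1
  have h_upper := sub_nonneg.2 hμ.2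
  have h00 : 0 ≤ 19 / 10 - 20 * μ * (1 - μ) * (1 - 2 * μ) + 14 / 5 * μ ^ 2 := by
    nlinarith [mul_nonneg h_upper (sq_nonneg (μ - 21 / 100))]
  have h01 : 0 ≤ μ + 10 * μ * (1 - μ) * (1 - 2 * μ) ^ 2 - 9 / 10 * (1 - μ) +
      7 / 5 * μ * (1 - μ) * (1 - 2 * μ) := by
    nlinarith [mul_nonneg (mul_nonneg h_lower h_upper) (sq_nonneg (μ - 87 / 200)),
      mul_nonneg h_lower h_upper, sq_nonneg (μ - 87 / 200)]
  have h11 : 0 ≤ μ ^ 2 + 20 * μ ^ 2 * (1 - μ) ^ 2 * (1 - 2 * μ) + 9 / 10 * (1 - μ) ^ 2 -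
      14 / 5 * μ * (1 - μ) ^ 3 := by
    have h : 0 ≤ μ * (1 - μ) ^ 2 * (1 / 2 - μ) := by positivity
    nlinarith [mul_nonneg h_lower h, mul_nonneg h_upper (sq_nonneg (1 - μ))]
  unfold largeT
  rcases hx with rfl | rfl <;> rcases hy with rfl | rfl
  · linear_combination μ ^ 2 * h00
  · linear_combination μ * h01
  · linear_combination μ * h01
  · linear_combination h11

theorem isDualCertificate_of_le_fifth (hμ : μ ∈ Set.Ioc 0 (1 / 5)) :
    IsDualCertificate (13 / 500 / μ) (13 / 500 * (1 - 17 / 50 * μ) / μ ^ 2)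
      (13 / 500 * (17 / 50) / μ ^ 2) μ := fun x hx y hy => by
  have hμ0 := hμ.1
  have hbound : dualBound (13 / 500 / μ) (13 / 500 * (1 - 17 / 50 * μ) / μ ^ 2)
      (13 / 500 * (17 / 50) / μ ^ 2) μ x y = 13 / 500 * smallT μ x y / μ ^ 2 := by
    unfold dualBound smallT
    field_simp
    ring
  rw [hbound]
  exact weightedLoss_le_of_margin_nonneg ⟨hμ0, hμ.2.trans_lt (by norm_num)⟩ hx hy
    (smallT_corner_nonneg (Set.Ioc_subset_Icc_self hμ)) (margin_smallT_nonneg hμ hx hy)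

theorem isDualCertificate_of_fifth_le (hμ : μ ∈ Set.Icc (1 / 5) (1 / 2)) :
    IsDualCertificate (13 / 50 * (1 - μ) * (1 - 2 * μ)) (13 / 500 * (9 / 10) / μ ^ 2)
      (13 / 500 * (7 / 5) / μ) μ := fun x hx y hy => by
  have hμ0 : 0 < μ := lt_of_lt_of_le (by norm_num) hμ.1
  have hbound : dualBound (13 / 50 * (1 - μ) * (1 - 2 * μ)) (13 / 500 * (9 / 10) / μ ^ 2)
      (13 / 500 * (7 / 5) / μ) μ x y = 13 / 500 * largeT μ x y / μ ^ 2 := by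
    unfold dualBound largeT
    field_simp
    ring
  rw [hbound]
  exact weightedLoss_le_of_margin_nonneg ⟨hμ0, hμ.2.trans_lt (by norm_num)⟩ hx hy
    (largeT_corner_nonneg hμ) (margin_largeT_nonneg hμ hx hy)

theorem exists_isDualCertificate (hμ : μ ∈ Set.Ioo 0 1) :
    ∃ α ω q, IsDualCertificate α ω q μ := by
  wlog h : μ ≤ 1 / 2 generalizing μ
  · obtain ⟨α, ω, q, hcert⟩ := this (Set.Ioo.one_sub_mem hμ) (by linarith)
    exact ⟨-α, ω, -q, by simpa using hcert.flip (Set.Ioo.one_sub_mem hμ)⟩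
  rcases le_total μ (1 / 5) with h' | h'
  · exact ⟨_, _, _, isDualCertificate_of_le_fifth ⟨hμ.1, h'⟩⟩
  · exact ⟨_, _, _, isDualCertificate_of_fifth_le ⟨h', h⟩⟩

end Margin

/-! ### Averaging over posterior laws -/

/-- A finitely supported law on `[0, 1]` with mean `μ`, that is, the distribution of the posterior
of an expert with prior `μ` and finitely many signals `ι`. -/
structure PosteriorLaw (μ : ℝ) (ι : Type*) [Fintype ι] where
  prob : ι → ℝ
  value : ι → ℝ
  prob_nonneg : ∀ i, 0 ≤ prob i
  sum_prob : ∑ i, prob i = 1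
  value_mem : ∀ i, value i ∈ Set.Icc 0 1
  mean : ∑ i, prob i * value i = μ

namespace PosteriorLaw

variable {μ : ℝ} {ι κ : Type*} [Fintype ι] [Fintype κ]

theorem sum_prob_mul_sub (P : PosteriorLaw μ ι) : ∑ i, P.prob i * (P.value i - μ) = 0 := by
  simp only [mul_sub, Finset.sum_sub_distrib, ← Finset.sum_mul, P.sum_prob, P.mean]
  ring

theorem sum_dualBound (P : PosteriorLaw μ ι) (Q : PosteriorLaw μ κ) (α ω q : ℝ) :
    ∑ i, ∑ j, P.prob i * Q.prob j * dualBound α ω q μ (P.value i) (Q.value j) = 13 / 500 := by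
  have inner (i : ι) : ∑ j, P.prob i * Q.prob j * dualBound α ω q μ (P.value i) (Q.value j) =
      P.prob i * (13 / 500) + P.prob i * (P.value i - μ) *
        (α - q * ∑ j, Q.prob j * (Q.value j - μ) ^ 2) := by
    have hsplit (j : κ) : P.prob i * Q.prob j * dualBound α ω q μ (P.value i) (Q.value j) =
        P.prob i * (13 / 500 + α * (P.value i - μ)) * Q.prob j +
        P.prob i * (α + ω * (P.value i - μ) - q * (P.value i - μ) ^ 2) *
          (Q.prob j * (Q.value j - μ)) -
        P.prob i * (q * (P.value i - μ)) * (Q.prob j * (Q.value j - μ) ^ 2) := by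
      unfold dualBound; ring
    simp only [hsplit, Finset.sum_sub_distrib, Finset.sum_add_distrib, ← Finset.mul_sum,
      Q.sum_prob, Q.sum_prob_mul_sub]
    ring
  simp only [inner, Finset.sum_add_distrib, ← Finset.sum_mul, P.sum_prob, P.sum_prob_mul_sub]
  ring

/-- The law on `{y, z}` with mean `μ`. -/
def twoPoint {y z : ℝ} (hy0 : 0 ≤ y) (hy : y ≤ μ) (hz : μ ≤ z) (hz1 : z ≤ 1) (h : y < z) :
    PosteriorLaw μ (Fin 2) where
  prob := ![(z - μ) / (z - y), (μ - y) / (z - y)]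
  value := ![y, z]
  prob_nonneg := Fin.forall_fin_two.2 ⟨div_nonneg (sub_nonneg.2 hz) (sub_pos.2 h).le,
    div_nonneg (sub_nonneg.2 hy) (sub_pos.2 h).le⟩
  sum_prob := by
    have hzy : z - y ≠ 0 := (sub_pos.2 h).ne'
    simp only [Fin.sum_univ_two, Matrix.cons_val_zero, Matrix.cons_val_one]
    field_simp
    ring
  value_mem := Fin.forall_fin_two.2 ⟨⟨hy0, hy.trans (hz.trans hz1)⟩, ⟨hy0.trans (hy.trans hz), hz1⟩⟩
  mean := by
    have hzy : z - y ≠ 0 := (sub_pos.2 h).ne'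
    simp only [Fin.sum_univ_two, Matrix.cons_val_zero, Matrix.cons_val_one]
    field_simp
    ring

end PosteriorLaw

theorem stmt_6_general {μ : ℝ} {ι κ : Type*} [Fintype ι] [Fintype κ] (hμ : μ ∈ Set.Ioo 0 1)
    (P : PosteriorLaw μ ι) (Q : PosteriorLaw μ κ) :
    ∑ i, ∑ j, P.prob i * Q.prob j * weightedLoss μ (P.value i) (Q.value j) ≤ 0.026 := by
  obtain ⟨α, ω, q, hcert⟩ := exists_isDualCertificate hμ
  calc ∑ i, ∑ j, P.prob i * Q.prob j * weightedLoss μ (P.value i) (Q.value j)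
      ≤ ∑ i, ∑ j, P.prob i * Q.prob j * dualBound α ω q μ (P.value i) (Q.value j) := by
        gcongr with i _ j _
        · exact mul_nonneg (P.prob_nonneg i) (Q.prob_nonneg j)
        · exact hcert _ (P.value_mem i) _ (Q.value_mem j)
    _ = 0.026 := by rw [P.sum_dualBound Q]; norm_num

/-- the relative loss of the average-prior scheme on every extreme
conditionally independent two-expert information structure is at most 0.026.
(Summands whose probability factor vanishes are automatically zero since `0/0 = 0`.) -/
theorem stmt_6 (μ y₁ z₁ y₂ z₂ : ℝ)
    (hμ0 : 0 < μ) (hμ1 : μ < 1)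
    (hy₁0 : 0 ≤ y₁) (hy₁ : y₁ ≤ μ) (hz₁ : μ ≤ z₁) (hz₁1 : z₁ ≤ 1) (h₁ : y₁ < z₁)
    (hy₂0 : 0 ≤ y₂) (hy₂ : y₂ ≤ μ) (hz₂ : μ ≤ z₂) (hz₂1 : z₂ ≤ 1) (h₂ : y₂ < z₂) :
    ((z₁-μ)/(z₁-y₁)) * ((z₂-μ)/(z₂-y₂)) * ((1-y₁)*(1-y₂)/(1-μ) + y₁*y₂/μ)
        * (gB μ y₁ y₂ - favg y₁ y₂)^2
    + ((z₁-μ)/(z₁-y₁)) * ((μ-y₂)/(z₂-y₂)) * ((1-y₁)*(1-z₂)/(1-μ) + y₁*z₂/μ)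
        * (gB μ y₁ z₂ - favg y₁ z₂)^2
    + ((μ-y₁)/(z₁-y₁)) * ((z₂-μ)/(z₂-y₂)) * ((1-z₁)*(1-y₂)/(1-μ) + z₁*y₂/μ)
        * (gB μ z₁ y₂ - favg z₁ y₂)^2
    + ((μ-y₁)/(z₁-y₁)) * ((μ-y₂)/(z₂-y₂)) * ((1-z₁)*(1-z₂)/(1-μ) + z₁*z₂/μ)
        * (gB μ z₁ z₂ - favg z₁ z₂)^2
    ≤ 0.026 := by
  simpa [Fin.sum_univ_two, PosteriorLaw.twoPoint, weightedLoss, mul_assoc, add_assoc] using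
    stmt_6_general ⟨hμ0, hμ1⟩ (.twoPoint hy₁0 hy₁ hz₁ hz₁1 h₁) (.twoPoint hy₂0 hy₂ hz₂ hz₂1 h₂)
end
end

section
/- Define g(μ, x₁, x₂) = x₁x₂(1−μ) / (x₁x₂(1−μ) + (1−x₁)(1−x₂)μ), ep(x₁,x₂) = 0.49x₁ + 0.49x₂ if x₁ + x₂ ≤ 1 and ep(x₁,x₂) = 0.49x₁ + 0.49x₂ + 0.02 otherwise, and f(x₁,x₂) = g(ep(x₁,x₂), x₁, x₂). For all real numbers μ, y₁, z₁, y₂, z₂ with 0 < μ < 1 and 0 ≤ y_i ≤ μ ≤ z_i ≤ 1 and y_i < z_i for i = 1, 2, the quantity Σ_{v₁ ∈ {y₁,z₁}} Σ_{v₂ ∈ {y₂,z₂}} p₁(v₁)·p₂(v₂)·( (1−v₁)(1−v₂)/(1−μ) + v₁v₂/μ )·( g(μ, v₁, v₂) − f(v₁, v₂) )² is at most 0.025, where p_i(y_i) = (z_i − μ)/(z_i − y_i) and p_i(z_i) = (μ − y_i)/(z_i − y_i), and any summand whose factor ((1−v₁)(1−v₂)/(1−μ) + v₁v₂/μ)·p₁(v₁)·p₂(v₂)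 is zero is taken to be zero. -/
noncomputable section

/-- The modified dummy prior `ep`. -/
def ep (x₁ x₂ : ℝ) : ℝ :=
  if x₁ + x₂ ≤ 1 then 0.49 * x₁ + 0.49 * x₂ else 0.49 * x₁ + 0.49 * x₂ + 0.02

/-- The modified average-prior aggregation scheme `f(x₁,x₂) = g(ep(x₁,x₂), x₁, x₂)`
(with the natural value `1` at the singular point `(1,1)`). -/
def fmod (x₁ x₂ : ℝ) : ℝ :=
  if x₁ = 1 ∧ x₂ = 1 then 1 else gB (ep x₁ x₂) x₁ x₂

/-!
The relative loss is maximised over all pairs of laws with mean `m` on `[0, 1]`, so the bound has a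
dual certificate: a potential `A` with
`loss m x y ≤ 1 / 40 + (x - m) * A y + (y - m) * A x` on the unit square. Averaging against two
mean-`m` laws kills both `A`-terms. Swapping the two states (`x ↦ 1 - x`, `m ↦ 1 - m`) exchanges the
two branches of `ep`, so the inequality is needed only for `x + y ≤ 1`, once for `A` at `m` and once
for `x ↦ -A (1 - x)` at `1 - m`, and only for `m ≤ 1 / 2`.

We take `A` cubic, with coefficients piecewise linear in `m` up to the factor `1 / m ^ 2`. In the
coordinates `S = x + y`, `t = 4 x y / S ^ 2` each piece then asks that a polynomial in three
variables be nonnegative on the unit cube. This is decided by exact integer arithmetic: a polynomial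
on `[0, 1]` is rewritten as a form in `x` and `1 - x`, and the interval is bisected until all
coefficients are nonnegative.
-/

section TwoPoint

/-- The expectation of `F` under the law on `{y, z}` with mean `m`. -/
def twoPointExp (m y z : ℝ) (F : ℝ → ℝ) : ℝ :=
  (z - m) / (z - y) * F y + (m - y) / (z - y) * F z

variable {m y z : ℝ}

theorem twoPointExp_mono (hy : y ≤ m) (hz : m ≤ z) {F G : ℝ → ℝ} (hFy : F y ≤ G y)
    (hFz : F z ≤ G z) : twoPointExp m y z F ≤ twoPointExp m y z G := by
  have hz' : 0 ≤ (z - m) / (z - y) := div_nonneg (by linarith) (by linarith)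
  have hy' : 0 ≤ (m - y) / (z - y) := div_nonneg (by linarith) (by linarith)
  unfold twoPointExp
  gcongr

theorem twoPointExp_const_add_centered (hyz : y < z) (c b : ℝ) :
    twoPointExp m y z (fun v => c + (v - m) * b) = c := by
  have : z - y ≠ 0 := (sub_pos.2 hyz).ne'
  unfold twoPointExp
  field_simp
  ring

theorem twoPointExp_const_add_mul_add_centered (hyz : y < z) (F : ℝ → ℝ) (c a b : ℝ) :
    twoPointExp m y z (fun v => c + a * F v + (v - m) * b) = c + a * twoPointExp m y z F := by
  have : z - y ≠ 0 := (sub_pos.2 hyz).ne'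
  unfold twoPointExp
  field_simp
  ring

end TwoPoint

section Dual

variable {L : ℝ → ℝ → ℝ} {m c : ℝ} {A : ℝ → ℝ}

/-- `A` is a dual certificate, for the constraint that both laws have mean `m`, of the upper bound
`c` on the expectation of `L` under product laws on the unit square. -/
def IsDualPotential (L : ℝ → ℝ → ℝ) (m c : ℝ) (A : ℝ → ℝ) : Prop :=
  ∀ x ∈ Set.Icc (0 : ℝ) 1, ∀ y ∈ Set.Icc (0 : ℝ) 1, L x y ≤ c + (x - m) * A y + (y - m) * A x

theorem IsDualPotential.twoPointExp_le (hA : IsDualPotential L m c A) {y₁ z₁ y₂ z₂ : ℝ}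
    (hy₁0 : 0 ≤ y₁) (hy₁ : y₁ ≤ m) (hz₁ : m ≤ z₁) (hz₁1 : z₁ ≤ 1) (h₁ : y₁ < z₁)
    (hy₂0 : 0 ≤ y₂) (hy₂ : y₂ ≤ m) (hz₂ : m ≤ z₂) (hz₂1 : z₂ ≤ 1) (h₂ : y₂ < z₂) :
    twoPointExp m y₁ z₁ (fun v => twoPointExp m y₂ z₂ (L v)) ≤ c := by
  have mem_y₂ : y₂ ∈ Set.Icc (0 : ℝ) 1 := ⟨hy₂0, h₂.le.trans hz₂1⟩
  have mem_z₂ : z₂ ∈ Set.Icc (0 : ℝ) 1 := ⟨hy₂0.trans h₂.le, hz₂1⟩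
  have inner_le (v : ℝ) (hv : v ∈ Set.Icc (0 : ℝ) 1) :
      twoPointExp m y₂ z₂ (L v) ≤ c + (v - m) * twoPointExp m y₂ z₂ A := by
    rw [← twoPointExp_const_add_mul_add_centered h₂ A c (v - m) (A v)]
    exact twoPointExp_mono hy₂ hz₂ (hA v hv y₂ mem_y₂) (hA v hv z₂ mem_z₂)
  rw [← twoPointExp_const_add_centered (m := m) h₁ c (twoPointExp m y₂ z₂ A)]
  exact twoPointExp_mono hy₁ hz₁ (inner_le y₁ ⟨hy₁0, h₁.le.trans hz₁1⟩)
    (inner_le z₁ ⟨hy₁0.trans h₁.le, hz₁1⟩)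

end Dual

section Loss

variable {m e x y : ℝ}

/-- The contribution of the pair of posteriors `(x, y)` to the relative loss of the scheme `fmod`
under the prior `m`. -/
def relativeLoss (m x y : ℝ) : ℝ :=
  ((1 - x) * (1 - y) / (1 - m) + x * y / m) * (gB m x y - fmod x y) ^ 2

/-- The denominator of `gB m x y`. -/
def poolDenom (m x y : ℝ) : ℝ := x * y * (1 - m) + (1 - x) * (1 - y) * m

/-- The contribution of `(x, y)` to the relative loss of pooling with the prior `e` when the true
prior is `m`; see `relativeLoss_eq_misspecifiedLoss`. Where the denominator vanishes, the junk
value `0` is the intended one. -/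
def misspecifiedLoss (m e x y : ℝ) : ℝ :=
  (x * y * ((1 - x) * (1 - y)) * (e - m)) ^ 2
    / (m * (1 - m) * poolDenom m x y * poolDenom e x y ^ 2)

theorem poolDenom_pos (hm0 : 0 < m) (hm1 : m < 1) (hxy : 0 < x * y) (hx : x ≤ 1) (hy : y ≤ 1) :
    0 < poolDenom m x y :=
  add_pos_of_pos_of_nonneg (mul_pos hxy (sub_pos.2 hm1))
    (mul_nonneg (mul_nonneg (sub_nonneg.2 hx) (sub_nonneg.2 hy)) hm0.le)

theorem gB_sub_gB (hm : poolDenom m x y ≠ 0) (he : poolDenom e x y ≠ 0) :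
    gB m x y - gB e x y
      = x * y * ((1 - x) * (1 - y)) * (e - m) / (poolDenom m x y * poolDenom e x y) := by
  change _ / poolDenom m x y - _ / poolDenom e x y = _
  rw [div_sub_div _ _ hm he]
  unfold poolDenom
  ring

theorem ep_mem_Ioo (h0 : 0 < x + y) (h2 : x + y < 2) : ep x y ∈ Set.Ioo (0 : ℝ) 1 := by
  unfold ep
  split_ifs <;> constructor <;> norm_num <;> linarith

theorem relativeLoss_eq_misspecifiedLoss (hm0 : 0 < m) (hm1 : m < 1) (hx : x ∈ Set.Icc (0 : ℝ) 1)
    (hy : y ∈ Set.Icc (0 : ℝ) 1) : relativeLoss m x y = misspecifiedLoss m (ep x y) x y := by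
  have hm1' : 1 - m ≠ 0 := (sub_pos.2 hm1).ne'
  by_cases hone : x = 1 ∧ y = 1
  · obtain ⟨rfl, rfl⟩ := hone
    have : gB m 1 1 = 1 := by simp [gB, hm1']
    simp [relativeLoss, misspecifiedLoss, fmod, this]
  have hfmod : fmod x y = gB (ep x y) x y := if_neg hone
  rcases (mul_nonneg hx.1 hy.1).eq_or_lt with hxy | hxy
  · simp [relativeLoss, misspecifiedLoss, hfmod, gB, ← hxy]
  have hS0 : 0 < x + y := by nlinarith [hx.1, hy.1]
  have hS2 : x + y < 2 := by
    by_contra! h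
    exact hone ⟨by linarith [hx.2, hy.2], by linarith [hx.2, hy.2]⟩
  obtain ⟨he0, he1⟩ := ep_mem_Ioo hS0 hS2
  have hD := (poolDenom_pos hm0 hm1 hxy hx.2 hy.2).ne'
  have hE := (poolDenom_pos he0 he1 hxy hx.2 hy.2).ne'
  have weight : (1 - x) * (1 - y) / (1 - m) + x * y / m = poolDenom m x y / (m * (1 - m)) := by
    unfold poolDenom
    field_simp
    ring
  rw [relativeLoss, misspecifiedLoss, hfmod, gB_sub_gB hD hE, weight]
  field_simp

theorem misspecifiedLoss_one_sub (m e x y : ℝ) :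
    misspecifiedLoss (1 - m) (1 - e) (1 - x) (1 - y) = misspecifiedLoss m e x y := by
  have denom (c : ℝ) : poolDenom (1 - c) (1 - x) (1 - y) = poolDenom c x y := by
    unfold poolDenom
    ring
  unfold misspecifiedLoss
  rw [denom, denom]
  congr 1 <;> ring

end Loss

section Reflection

variable {m : ℝ} {A : ℝ → ℝ}

/-- The potential inequality for the loss of `fmod` on the region `x + y ≤ 1`, where
`ep x y = 0.49 * (x + y)`. -/
def IsLowerPotential (m : ℝ) (A : ℝ → ℝ) : Prop :=
  ∀ x y, 0 ≤ x → 0 ≤ y → x + y ≤ 1 →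
    misspecifiedLoss m (0.49 * (x + y)) x y ≤ 1 / 40 + (x - m) * A y + (y - m) * A x

/-- The potential for the prior `1 - m` that corresponds to `A` when the two states are swapped. -/
def swapStates (A : ℝ → ℝ) (x : ℝ) : ℝ := -A (1 - x)

theorem swapStates_swapStates (A : ℝ → ℝ) : swapStates (swapStates A) = A := by
  ext x
  simp [swapStates]

theorem isDualPotential_of_isLowerPotential (hm0 : 0 < m) (hm1 : m < 1)
    (hA : IsLowerPotential m A) (hA' : IsLowerPotential (1 - m) (swapStates A)) :
    IsDualPotential (relativeLoss m) m (1 / 40) A := by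
  intro x hx y hy
  rw [relativeLoss_eq_misspecifiedLoss hm0 hm1 hx hy]
  rcases le_or_gt (x + y) 1 with h | h
  · have he : ep x y = 0.49 * (x + y) := by rw [ep, if_pos h]; ring
    rw [he]
    exact hA x y hx.1 hy.1 h
  · have he : ep x y = 1 - 0.49 * (1 - x + (1 - y)) := by rw [ep, if_neg h.not_ge]; ring
    have swapped := hA' (1 - x) (1 - y) (sub_nonneg.2 hx.2) (sub_nonneg.2 hy.2) (by linarith)
    rw [he, ← misspecifiedLoss_one_sub, sub_sub_cancel]
    simp only [swapStates, sub_sub_cancel] at swapped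
    linarith

end Reflection

/-- Polynomials in one variable as lists of coefficients, constant term first. In contrast to
`Polynomial`, their arithmetic can be evaluated by the kernel. -/
def DensePoly (R : Type*) : Type _ := List R

/-- `φ` respects the operations that are available on `DensePoly`. -/
structure IsEvaluation {R : Type*} [Zero R] [One R] [Add R] [Sub R] [Mul R] [SMul ℤ R]
    (φ : R → ℝ) : Prop where
  map_zero : φ 0 = 0
  map_one : φ 1 = 1
  map_add a b : φ (a + b) = φ a + φ b
  map_sub a b : φ (a - b) = φ a - φ b
  map_mul a b : φ (a * b) = φ a * φ b
  map_zsmul (k : ℤ) a : φ (k • a) = k * φ a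

theorem isEvaluation_intCast : IsEvaluation ((↑) : ℤ → ℝ) where
  map_zero := Int.cast_zero
  map_one := Int.cast_one
  map_add := Int.cast_add
  map_sub := Int.cast_sub
  map_mul := Int.cast_mul
  map_zsmul k a := by rw [smul_eq_mul, Int.cast_mul]

namespace DensePoly

variable {R : Type*}

section Arithmetic

/-- Coefficientwise addition, the shorter list being padded by zeros. -/
def addCoeffs [Add R] : List R → List R → List R
  | [], l => l
  | a :: l, [] => a :: l
  | a :: l, b :: k => (a + b) :: addCoeffs l k

/-- The coefficients of a product. -/
def mulCoeffs [Zero R] [Add R] [Mul R] (p q : List R) : List R :=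
  p.foldr (fun c r => addCoeffs (q.map (c * ·)) (0 :: r)) []

instance : Zero (DensePoly R) := ⟨([] : List R)⟩
instance [One R] : One (DensePoly R) := ⟨([1] : List R)⟩
instance [Add R] : Add (DensePoly R) := ⟨addCoeffs⟩
instance [SMul ℤ R] : SMul ℤ (DensePoly R) := ⟨fun k => List.map (k • ·)⟩
instance [Add R] [SMul ℤ R] : Sub (DensePoly R) := ⟨fun p q => p + (-1 : ℤ) • q⟩
instance [Zero R] [Add R] [Mul R] : Mul (DensePoly R) := ⟨mulCoeffs⟩

/-- The variable. -/
def X [Zero R] [One R] : DensePoly R := ([0, 1] : List R)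

/-- Constant polynomials. -/
def C (c : R) : DensePoly R := ([c] : List R)

end Arithmetic

section Form

variable {φ : R → ℝ}

/-- The value at `(x, w)` of the binary form of degree `l.length - 1` whose coefficients, in
increasing powers of `x`, are `l`. -/
def formEval (φ : R → ℝ) (x w : ℝ) : List R → ℝ
  | [] => 0
  | c :: l => φ c * w ^ l.length + x * formEval φ x w l

theorem formEval_nonneg {x w : ℝ} (hx : 0 ≤ x) (hw : 0 ≤ w) :
    ∀ {l : List R}, (∀ c ∈ l, 0 ≤ φ c) → 0 ≤ formEval φ x w l
  | [], _ => le_rfl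
  | _ :: _, h =>
    have hl := List.forall_mem_cons.1 h
    add_nonneg (mul_nonneg hl.1 (pow_nonneg hw _)) (mul_nonneg hx (formEval_nonneg hx hw hl.2))

theorem formEval_append_singleton (φ : R → ℝ) (x w : ℝ) (c : R) (l : List R) :
    formEval φ x w (l ++ [c]) = w * formEval φ x w l + φ c * x ^ l.length := by
  induction l with
  | nil => simp [formEval]
  | cons a l ih =>
    simp only [List.cons_append, formEval, ih, List.length_append, List.length_cons,
      List.length_nil]
    ring

theorem formEval_reverse (φ : R → ℝ) (x w : ℝ) (l : List R) :
    formEval φ x w l.reverse = formEval φ w x l := by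
  induction l with
  | nil => rfl
  | cons a l ih =>
    rw [List.reverse_cons, formEval_append_singleton, ih, List.length_reverse, formEval]
    ring

/-- Multiplication of the form `l` by `x + w`, followed by the addition of `c * w ^ l.length`. -/
def push [Add R] (c : R) : List R → List R
  | [] => [c]
  | a :: l => (c + a) :: push a l

/-- The substitution `x ↦ x + w`, by Horner's rule. -/
def shear [Add R] (l : List R) : List R := l.foldr push []

/-- The substitution `x ↦ 2 * x`, with an overall factor `a`. -/
def dilate [SMul ℤ R] (a : ℤ) : List R → List R
  | [] => []
  | c :: l => (a • c) :: dilate (a + a) l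

/-- The substitution `x ↦ 2 * x + w`, which maps the positive quadrant onto `w ≤ x`. -/
def restrictRight [Add R] [SMul ℤ R] (l : List R) : List R := dilate 1 (shear l)

/-- The substitution `w ↦ x + 2 * w`, which maps the positive quadrant onto `x ≤ w`. -/
def restrictLeft [Add R] [SMul ℤ R] (l : List R) : List R := (restrictRight l.reverse).reverse

section Add

variable [Add R]

theorem length_push (c : R) (l : List R) : (push c l).length = l.length + 1 := by
  induction l generalizing c with
  | nil => rfl
  | cons a l ih => simp [push, ih]

theorem length_shear (l : List R) : (shear l).length = l.length := by
  induction l with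
  | nil => rfl
  | cons a l ih => rw [shear, List.foldr_cons, length_push, ← shear, ih, List.length_cons]

theorem formEval_push (hφ : ∀ a b, φ (a + b) = φ a + φ b) (x w : ℝ) (c : R) (l : List R) :
    formEval φ x w (push c l) = φ c * w ^ l.length + (x + w) * formEval φ x w l := by
  induction l generalizing c with
  | nil => simp [push, formEval]
  | cons a l ih =>
    simp only [push, formEval, hφ, ih, length_push, List.length_cons]
    ring

theorem formEval_shear (hφ : ∀ a b, φ (a + b) = φ a + φ b) (x w : ℝ) (l : List R) :
    formEval φ x w (shear l) = formEval φ (x + w) w l := by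
  induction l with
  | nil => rfl
  | cons a l ih =>
    rw [shear, List.foldr_cons, formEval_push hφ, ← shear, ih, length_shear, formEval]

/-- The substitution `w ↦ x + w`. At `w = 1 - x` it turns the form into the polynomial with the same
coefficients. -/
def homogenize (l : List R) : List R := (shear l.reverse).reverse

theorem formEval_homogenize (hφ : ∀ a b, φ (a + b) = φ a + φ b) (x w : ℝ) (l : List R) :
    formEval φ x w (homogenize l) = formEval φ x (w + x) l := by
  rw [homogenize, formEval_reverse, formEval_shear hφ, formEval_reverse]

end Add

theorem formEval_dilate [SMul ℤ R] (hφ : ∀ (k : ℤ) a, φ (k • a) = k * φ a) (x w : ℝ) (a : ℤ)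
    (l : List R) : formEval φ x w (dilate a l) = a * formEval φ (2 * x) w l := by
  have length_dilate (l : List R) (a : ℤ) : (dilate a l).length = l.length := by
    induction l generalizing a with
    | nil => rfl
    | cons c l ih => simp [dilate, ih]
  induction l generalizing a with
  | nil => simp [dilate, formEval]
  | cons c l ih =>
    simp only [dilate, formEval, hφ, ih, length_dilate, Int.cast_add]
    ring

section Bisection

variable [Add R] [SMul ℤ R]

theorem formEval_restrictRight (hadd : ∀ a b, φ (a + b) = φ a + φ b)
    (hsmul : ∀ (k : ℤ) a, φ (k • a) = k * φ a) (x w : ℝ) (l : List R) :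
    formEval φ x w (restrictRight l) = formEval φ (2 * x + w) w l := by
  rw [restrictRight, formEval_dilate hsmul, formEval_shear hadd, Int.cast_one, one_mul]

theorem formEval_restrictLeft (hadd : ∀ a b, φ (a + b) = φ a + φ b)
    (hsmul : ∀ (k : ℤ) a, φ (k • a) = k * φ a) (x w : ℝ) (l : List R) :
    formEval φ x w (restrictLeft l) = formEval φ x (2 * w + x) l := by
  rw [restrictLeft, formEval_reverse, formEval_restrictRight hadd hsmul, formEval_reverse]

/-- A sufficient test for nonnegativity of the form `l` on the positive quadrant: after at most
`depth` bisections all coefficients pass `test`. -/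
def certifyForm (test : R → Bool) : ℕ → List R → Bool
  | 0, l => l.all test
  | depth + 1, l => l.all test ||
      (certifyForm test depth (restrictLeft l) && certifyForm test depth (restrictRight l))

theorem formEval_nonneg_of_certifyForm (hadd : ∀ a b, φ (a + b) = φ a + φ b)
    (hsmul : ∀ (k : ℤ) a, φ (k • a) = k * φ a) {test : R → Bool}
    (htest : ∀ c, test c = true → 0 ≤ φ c) {depth : ℕ} {l : List R}
    (h : certifyForm test depth l = true) {x w : ℝ} (hx : 0 ≤ x) (hw : 0 ≤ w) :
    0 ≤ formEval φ x w l := by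
  have of_all {l : List R} (h : l.all test = true) (c : R) (hc : c ∈ l) : 0 ≤ φ c :=
    htest c (List.all_eq_true.1 h c hc)
  induction depth generalizing l x w with
  | zero => exact formEval_nonneg hx hw (of_all h)
  | succ depth ih =>
    rw [certifyForm, Bool.or_eq_true, Bool.and_eq_true] at h
    rcases h with h | ⟨hleft, hright⟩
    · exact formEval_nonneg hx hw (of_all h)
    rcases le_total x w with hxw | hwx
    · have := ih hleft hx (w := (w - x) / 2) (by linarith)
      rwa [formEval_restrictLeft hadd hsmul, mul_div_cancel₀ _ two_ne_zero, sub_add_cancel] at this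
    · have := ih hright (x := (x - w) / 2) (by linarith) hw
      rwa [formEval_restrictRight hadd hsmul, mul_div_cancel₀ _ two_ne_zero, sub_add_cancel] at this

end Bisection

end Form

section Eval

variable {φ : R → ℝ}

/-- The value at `x` of a polynomial whose coefficients are evaluated by `φ`. -/
def eval (φ : R → ℝ) (x : ℝ) (p : DensePoly R) : ℝ := formEval φ x 1 p

@[simp]
theorem eval_nil (φ : R → ℝ) (x : ℝ) : eval φ x ([] : List R) = 0 := rfl

@[simp]
theorem eval_cons (φ : R → ℝ) (x : ℝ) (c : R) (l : List R) :
    eval φ x (c :: l : List R) = φ c + x * eval φ x l := by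
  simp [eval, formEval]

theorem eval_addCoeffs [Add R] (hφ : ∀ a b, φ (a + b) = φ a + φ b) (x : ℝ) (p q : List R) :
    eval φ x (addCoeffs p q) = eval φ x p + eval φ x q := by
  induction p generalizing q with
  | nil => simp [addCoeffs]
  | cons a p ih =>
    cases q with
    | nil => simp [addCoeffs]
    | cons b q =>
      simp only [addCoeffs, eval_cons, hφ, ih]
      ring

theorem eval_map {f : R → R} {c : ℝ} (hf : ∀ a, φ (f a) = c * φ a) (x : ℝ) (p : List R) :
    eval φ x (p.map f) = c * eval φ x p := by
  induction p with
  | nil => simp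
  | cons a p ih =>
    simp only [List.map_cons, eval_cons, hf, ih]
    ring

theorem eval_C (φ : R → ℝ) (x : ℝ) (c : R) : eval φ x (C c) = φ c := by
  simp [C]

variable [Zero R] [One R] [Add R] [Sub R] [Mul R] [SMul ℤ R]

theorem eval_X (hφ : IsEvaluation φ) (x : ℝ) : eval φ x X = x := by
  simp [X, hφ.map_zero, hφ.map_one]

theorem eval_mulCoeffs (hφ : IsEvaluation φ) (x : ℝ) (p q : List R) :
    eval φ x (mulCoeffs p q) = eval φ x p * eval φ x q := by
  induction p with
  | nil => simp [mulCoeffs]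
  | cons a p ih =>
    rw [mulCoeffs, List.foldr_cons, ← mulCoeffs, eval_addCoeffs hφ.map_add,
      eval_map (hφ.map_mul a), eval_cons, eval_cons, ih, hφ.map_zero]
    ring

theorem _root_.IsEvaluation.eval (hφ : IsEvaluation φ) (x : ℝ) :
    IsEvaluation (DensePoly.eval φ x) where
  map_zero := rfl
  map_one := by
    change DensePoly.eval φ x ([1] : List R) = 1
    simp [hφ.map_one]
  map_add := eval_addCoeffs hφ.map_add x
  map_sub p q := calc
    DensePoly.eval φ x (p - q)
      = DensePoly.eval φ x p + DensePoly.eval φ x ((-1 : ℤ) • q) :=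
        eval_addCoeffs hφ.map_add x p _
    _ = DensePoly.eval φ x p + (-1 : ℤ) * DensePoly.eval φ x q :=
        congrArg _ (eval_map (hφ.map_zsmul (-1)) x q)
    _ = DensePoly.eval φ x p - DensePoly.eval φ x q := by push_cast; ring
  map_mul := eval_mulCoeffs hφ x
  map_zsmul k := eval_map (hφ.map_zsmul k) x

end Eval

variable [Add R] [SMul ℤ R]

/-- A sufficient test for nonnegativity of `p` on `[0, 1]`. -/
def certifyNonneg (test : R → Bool) (depth : ℕ) (p : DensePoly R) : Bool :=
  certifyForm test depth (homogenize p)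

theorem eval_nonneg_of_certifyNonneg {φ : R → ℝ} (hadd : ∀ a b, φ (a + b) = φ a + φ b)
    (hsmul : ∀ (k : ℤ) a, φ (k • a) = k * φ a) {test : R → Bool}
    (htest : ∀ c, test c = true → 0 ≤ φ c) {depth : ℕ} {p : DensePoly R}
    (h : certifyNonneg test depth p = true) {x : ℝ} (hx : x ∈ Set.Icc (0 : ℝ) 1) :
    0 ≤ eval φ x p := by
  have form_nonneg := formEval_nonneg_of_certifyForm hadd hsmul htest h hx.1 (sub_nonneg.2 hx.2)
  have form_eq := formEval_homogenize hadd x (1 - x) p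
  rw [sub_add_cancel] at form_eq
  exact form_nonneg.trans_eq form_eq

end DensePoly

section Slack

/-- A prior `M / 1000` together with a potential `5 / (2 * M ^ 2) * (c₀ + c₁ x + c₂ x² + c₃ x³)`. -/
structure Node (R : Type*) where
  M : R
  (c₀ c₁ c₂ c₃ : R)

namespace Node

/-- The potential described by a node. -/
def potential (n : Node ℝ) (x : ℝ) : ℝ :=
  5 / (2 * n.M ^ 2) * (n.c₀ + n.c₁ * x + n.c₂ * x ^ 2 + n.c₃ * x ^ 3)

/-- Application of `φ` to all entries. -/
def map {R R' : Type*} (φ : R → R') (n : Node R) : Node R' :=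
  ⟨φ n.M, φ n.c₀, φ n.c₁, φ n.c₂, φ n.c₃⟩

variable {R : Type*} [One R] [Add R] [Sub R] [Mul R] [SMul ℤ R]

/-- The node whose potential is `x ↦ -A (1 - x)`, where `A` is the potential of `n`. -/
def swap (n : Node R) : Node R :=
  ⟨n.M, (-1 : ℤ) • (n.c₀ + n.c₁ + n.c₂ + n.c₃), n.c₁ + (2 : ℤ) • n.c₂ + (3 : ℤ) • n.c₃,
    (-1 : ℤ) • (n.c₂ + (3 : ℤ) • n.c₃), n.c₃⟩

/-- The upper bound `1 / 40 + (x - p) * A y + (y - p) * A x`, scaled by `1600 * M ^ 2`, as a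
polynomial in `P = 1000 * p`, `S = x + y` and `a = 4 * x * y`. -/
def dualSide (P : R) (n : Node R) (S a : R) : R :=
  (40 : ℤ) • (n.M * n.M) + n.c₀ * ((4000 : ℤ) • S - (8 : ℤ) • P)
    + n.c₁ * ((2000 : ℤ) • a - (4 : ℤ) • (P * S))
    + n.c₂ * ((1000 : ℤ) • (a * S) - P * ((4 : ℤ) • (S * S) - (2 : ℤ) • a))
    + n.c₃ * (a * ((1000 : ℤ) • (S * S) - (500 : ℤ) • a)
      - P * (S * ((4 : ℤ) • (S * S) - (3 : ℤ) • a)))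

/-- The difference of the two sides of the potential inequality for the prior `P / 1000` on the
region `x + y ≤ 1`, cleared of denominators, in the coordinates `S = x + y` and
`t = 4 * x * y / S ^ 2`; see `sq_mul_slack`. -/
def slack (P : R) (n : Node R) (S t : R) : R :=
  let k := S * t
  let a := S * k
  let T := 1 - S
  let d := (25 : ℤ) • k + (49 : ℤ) • T
  let v := k * (a + (4 : ℤ) • T) * ((49000 : ℤ) • S - (100 : ℤ) • P)
  ((1000 : ℤ) • 1 - n.M) * n.dualSide P S a * (((1000 : ℤ) • a + (4 : ℤ) • (P * T)) * (d * d))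
    - (25000 : ℤ) • (n.M * (v * v))

/-- The slack for the prior `M / 1000` and the potential of `n`. -/
def lowerSlack (n : Node R) (S t : R) : R := n.slack n.M S t

/-- The slack for the prior `1 - M / 1000` and the swapped potential of `n`. -/
def upperSlack (n : Node R) (S t : R) : R := n.swap.slack ((1000 : ℤ) • 1 - n.M) S t

variable [Zero R] {φ : R → ℝ}

theorem map_slack (hφ : IsEvaluation φ) (P : R) (n : Node R) (S t : R) :
    φ (n.slack P S t) = (n.map φ).slack (φ P) (φ S) (φ t) := by
  simp only [slack, dualSide, map, hφ.map_add, hφ.map_sub, hφ.map_mul, hφ.map_zsmul, hφ.map_one,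
    zsmul_eq_mul]

theorem map_lowerSlack (hφ : IsEvaluation φ) (n : Node R) (S t : R) :
    φ (n.lowerSlack S t) = (n.map φ).lowerSlack (φ S) (φ t) :=
  map_slack hφ n.M n S t

theorem map_upperSlack (hφ : IsEvaluation φ) (n : Node R) (S t : R) :
    φ (n.upperSlack S t) = (n.map φ).upperSlack (φ S) (φ t) := by
  simp only [upperSlack, map_slack hφ, swap, map, hφ.map_add, hφ.map_sub, hφ.map_zsmul,
    hφ.map_one, zsmul_eq_mul]

theorem potential_swap (n : Node ℝ) : n.swap.potential = swapStates n.potential := by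
  ext x
  simp only [potential, swap, swapStates, zsmul_eq_mul]
  push_cast
  ring

variable {n : Node ℝ} {p x y : ℝ}

theorem dualSide_eq (hM : n.M ≠ 0) (p x y : ℝ) :
    n.dualSide (1000 * p) (x + y) (4 * (x * y))
      = 1600 * n.M ^ 2 * (1 / 40 + (x - p) * n.potential y + (y - p) * n.potential x) := by
  simp only [dualSide, potential, zsmul_eq_mul]
  push_cast
  field_simp
  ring

theorem sq_mul_slack (n : Node ℝ) (p : ℝ) (hS : x + y ≠ 0) :
    (x + y) ^ 2 * n.slack (1000 * p) (x + y) (4 * (x * y) / (x + y) ^ 2)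
      = 4 * 10 ^ 7 * ((1000 - n.M) * n.dualSide (1000 * p) (x + y) (4 * (x * y)) * poolDenom p x y
            * poolDenom (0.49 * (x + y)) x y ^ 2
          - 16 * 10 ^ 8 * n.M
            * (x * y * ((1 - x) * (1 - y)) * (0.49 * (x + y) - p)) ^ 2) := by
  have ha : (x + y) * ((x + y) * (4 * (x * y) / (x + y) ^ 2)) = 4 * (x * y) := by
    field_simp
  simp only [slack, poolDenom, zsmul_eq_mul, ha]
  generalize n.dualSide _ _ _ = W
  push_cast
  field_simp
  ring

-- The slack vanishes at `S = 1`, `t = 0` whatever the potential, so this point needs continuity.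
theorem dualSide_nonneg_of_slack_nonneg (hM : n.M < 1000) (hp : 0 < p)
    (h : ∀ S ∈ Set.Icc (0 : ℝ) 1, 0 ≤ n.slack (1000 * p) S 0) {S : ℝ}
    (hS : S ∈ Set.Icc (0 : ℝ) 1) : 0 ≤ n.dualSide (1000 * p) S 0 := by
  have nonneg_Ico (s : ℝ) (hs : s ∈ Set.Ico (0 : ℝ) 1) : 0 ≤ n.dualSide (1000 * p) s 0 := by
    have hT : 0 < 1 - s := sub_pos.2 hs.2
    have slack_eq : n.slack (1000 * p) s 0
        = (1000 - n.M) * (4 * (1000 * p * (1 - s)) * (49 * (1 - s)) ^ 2)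
          * n.dualSide (1000 * p) s 0 := by
      simp only [slack, mul_zero, zero_mul, zsmul_eq_mul]
      push_cast
      ring
    have : 0 < 1000 - n.M := sub_pos.2 hM
    refine nonneg_of_mul_nonneg_right ((h s ⟨hs.1, hs.2.le⟩).trans_eq slack_eq) ?_
    positivity
  have cont : Continuous fun s => n.dualSide (1000 * p) s 0 := by
    unfold dualSide
    fun_prop
  rw [← closure_Ico zero_ne_one] at hS
  exact le_on_closure nonneg_Ico continuousOn_const cont.continuousOn hS

theorem isLowerPotential_potential (hM0 : 0 < n.M) (hM1 : n.M < 1000) (hp0 : 0 < p) (hp1 : p < 1)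
    (hp : n.M * (1000 - n.M) = 10 ^ 6 * (p * (1 - p)))
    (h : ∀ S ∈ Set.Icc (0 : ℝ) 1, ∀ t ∈ Set.Icc (0 : ℝ) 1, 0 ≤ n.slack (1000 * p) S t) :
    IsLowerPotential p n.potential := by
  intro x y hx hy hxy
  have hS : x + y ∈ Set.Icc (0 : ℝ) 1 := ⟨add_nonneg hx hy, hxy⟩
  have side_eq := dualSide_eq hM0.ne' p x y
  set bound := 1 / 40 + (x - p) * n.potential y + (y - p) * n.potential x
  rcases (mul_nonneg hx hy).eq_or_lt with hxy0 | hxy0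
  · have side_nonneg : 0 ≤ n.dualSide (1000 * p) (x + y) (4 * (x * y)) := by
      rw [← hxy0, mul_zero]
      exact dualSide_nonneg_of_slack_nonneg hM1 hp0 (fun S hS => h S hS 0 (by simp)) hS
    rw [side_eq] at side_nonneg
    simpa [misspecifiedLoss, ← hxy0] using nonneg_of_mul_nonneg_right side_nonneg (by positivity)
  have hS0 : 0 < x + y := by nlinarith
  have ht : 4 * (x * y) / (x + y) ^ 2 ∈ Set.Icc (0 : ℝ) 1 :=
    ⟨by positivity, div_le_one_of_le₀ (by linarith [sq_nonneg (x - y)]) (sq_nonneg _)⟩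
  have hD := poolDenom_pos hp0 hp1 hxy0 (by linarith) (by linarith)
  have hE : 0 < poolDenom (0.49 * (x + y)) x y :=
    poolDenom_pos (by positivity) (by norm_num; linarith) hxy0 (by linarith) (by linarith)
  have slack_nonneg := mul_nonneg (sq_nonneg (x + y)) (h _ hS _ ht)
  rw [sq_mul_slack n p hS0.ne', side_eq] at slack_nonneg
  set N := x * y * ((1 - x) * (1 - y)) * (0.49 * (x + y) - p)
  set D := poolDenom p x y
  set E := poolDenom (0.49 * (x + y)) x y
  have factored : 4 * 10 ^ 7 * ((1000 - n.M) * (1600 * n.M ^ 2 * bound) * D * E ^ 2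
        - 16 * 10 ^ 8 * n.M * N ^ 2)
      = 64 * 10 ^ 15 * n.M * (bound * (p * (1 - p) * D * E ^ 2) - N ^ 2) := by
    linear_combination 64 * 10 ^ 9 * n.M * bound * D * E ^ 2 * hp
  have : 0 < 1 - p := sub_pos.2 hp1
  rw [misspecifiedLoss, div_le_iff₀ (by positivity), ← sub_nonneg]
  exact nonneg_of_mul_nonneg_right (slack_nonneg.trans_eq factored) (by positivity)

end Node

end Slack

section Certificate

open DensePoly

/-- Integer polynomials in `z`, `S` and `t`, the outermost variable being `z`. -/
abbrev TriPoly : Type := DensePoly (DensePoly (DensePoly ℤ))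

namespace TriPoly

/-- The value of a polynomial at `(z, S, t)`. -/
def eval (z S t : ℝ) : TriPoly → ℝ := DensePoly.eval (DensePoly.eval (DensePoly.eval (↑) t) S) z

/-- The variable `S`. -/
def S : TriPoly := C X

/-- The variable `t`. -/
def t : TriPoly := C (C X)

/-- The affine function of `z` with value `u` at `z = 0` and `v` at `z = 1`. -/
def lerp (u v : ℤ) : TriPoly := u • 1 + (v - u) • X

/-- A sufficient test for nonnegativity on the unit cube. -/
def certifyNonneg (p : TriPoly) : Bool :=
  DensePoly.certifyNonneg
    (DensePoly.certifyNonneg (DensePoly.certifyNonneg (fun k : ℤ => decide (0 ≤ k)) 8) 8) 8 p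

theorem isEvaluation_eval (z S t : ℝ) : IsEvaluation (eval z S t) :=
  ((isEvaluation_intCast.eval t).eval S).eval z

theorem eval_S (z S t : ℝ) : eval z S t TriPoly.S = S :=
  (eval_C _ z _).trans (eval_X (isEvaluation_intCast.eval t) S)

theorem eval_t (z S t : ℝ) : eval z S t TriPoly.t = t :=
  (eval_C _ z _).trans ((eval_C _ S _).trans (eval_X isEvaluation_intCast t))

theorem eval_lerp (z S t : ℝ) (u v : ℤ) : eval z S t (lerp u v) = u + (v - u) * z := by
  have h := isEvaluation_eval z S t
  have eval_X : eval z S t X = z := eval_X ((isEvaluation_intCast.eval t).eval S) z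
  rw [lerp, h.map_add, h.map_zsmul, h.map_zsmul, h.map_one, eval_X]
  push_cast
  ring

theorem eval_nonneg_of_certifyNonneg {p : TriPoly} (h : certifyNonneg p = true) {z S t : ℝ}
    (hz : z ∈ Set.Icc (0 : ℝ) 1) (hS : S ∈ Set.Icc (0 : ℝ) 1) (ht : t ∈ Set.Icc (0 : ℝ) 1) :
    0 ≤ eval z S t p := by
  have eval_t := isEvaluation_intCast.eval t
  have eval_S := eval_t.eval S
  refine DensePoly.eval_nonneg_of_certifyNonneg eval_S.map_add eval_S.map_zsmul ?_ h hz
  refine fun q hq => DensePoly.eval_nonneg_of_certifyNonneg eval_t.map_add eval_t.map_zsmul ?_ hq hS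
  refine fun r hr => DensePoly.eval_nonneg_of_certifyNonneg isEvaluation_intCast.map_add
    isEvaluation_intCast.map_zsmul ?_ hr ht
  exact fun k hk => Int.cast_nonneg (of_decide_eq_true hk)

end TriPoly

namespace Node

/-- The linear interpolation between two nodes. -/
def lerp (u v : Node ℤ) : Node TriPoly :=
  ⟨.lerp u.M v.M, .lerp u.c₀ v.c₀, .lerp u.c₁ v.c₁, .lerp u.c₂ v.c₂, .lerp u.c₃ v.c₃⟩

/-- Interpolation between `u` and `v` passes the test for a potential at every prior between `u`
and `v`. -/
def Certified (u v : Node ℤ) : Prop :=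
  u.M < v.M ∧ ((lerp u v).lowerSlack .S .t).certifyNonneg = true
    ∧ ((lerp u v).upperSlack .S .t).certifyNonneg = true

instance : DecidableRel Certified := fun _ _ => inferInstanceAs (Decidable (_ ∧ _))

end Node

/-- The interpolation nodes of the dual certificate for priors up to `1 / 2`, found by numerical
optimisation. -/
def nodes : List (Node ℤ) :=
  [⟨0, 0, 5000, 0, 0⟩, ⟨40, 200, 4941, 225, -1872⟩, ⟨70, 348, 4999, -35, -4176⟩,
    ⟨90, 450, 4939, 408, -4178⟩, ⟨105, 521, 5037, 521, -5022⟩, ⟨115, 572, 5010, 694, -4839⟩,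
    ⟨125, 620, 5053, 476, -4918⟩, ⟨140, 700, 4824, 1124, -4431⟩, ⟨160, 797, 4859, 1559, -4209⟩,
    ⟨200, 972, 4711, 2036, -3438⟩, ⟨250, 1235, 2726, 9646, -10392⟩,
    ⟨350, 1626, -5609, 34914, -29336⟩, ⟨500, 2303, -38079, 113670, -80341⟩]

theorem nodes_certified : nodes.IsChain Node.Certified := by
  decide +kernel

theorem exists_rel_of_isChain {α β : Type*} [LinearOrder β] {r : α → α → Prop} (f : α → β) {x : β}
    {a b : α} {l : List α} (h : (a :: b :: l).IsChain r) (ha : f a ≤ x)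
    (hx : x ≤ f ((b :: l).getLast (List.cons_ne_nil b l))) :
    ∃ u v, r u v ∧ f u ≤ x ∧ x ≤ f v := by
  induction l generalizing a b with
  | nil => exact ⟨a, b, List.isChain_pair.1 h, ha, hx⟩
  | cons c l ih =>
    obtain ⟨hab, hl⟩ := List.isChain_cons_cons.1 h
    rcases le_total x (f b) with hb | hb
    · exact ⟨a, b, hab, ha, hb⟩
    · exact ih hl hb hx

theorem exists_node {m : ℝ} (hm0 : 0 ≤ m) (hm : m ≤ 1 / 2) :
    ∃ n : Node ℝ, n.M = 1000 * m ∧ ∀ S ∈ Set.Icc (0 : ℝ) 1, ∀ t ∈ Set.Icc (0 : ℝ) 1,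
      0 ≤ n.lowerSlack S t ∧ 0 ≤ n.upperSlack S t := by
  obtain ⟨u, v, ⟨huv, hlower, hupper⟩, hu, hv⟩ :=
    exists_rel_of_isChain (fun n : Node ℤ => (n.M : ℝ)) (x := 1000 * m) nodes_certified
      (by simpa using hm0) (by norm_num; linarith)
  have huv' : (0 : ℝ) < v.M - u.M := by exact_mod_cast sub_pos.2 huv
  set z : ℝ := (1000 * m - u.M) / (v.M - u.M) with hz_def
  have hz : z ∈ Set.Icc (0 : ℝ) 1 :=
    ⟨div_nonneg (by linarith) huv'.le, (div_le_one huv').2 (by linarith)⟩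
  let n : Node ℝ := ⟨u.M + (v.M - u.M) * z, u.c₀ + (v.c₀ - u.c₀) * z, u.c₁ + (v.c₁ - u.c₁) * z,
    u.c₂ + (v.c₂ - u.c₂) * z, u.c₃ + (v.c₃ - u.c₃) * z⟩
  have map_lerp (S t : ℝ) : (Node.lerp u v).map (TriPoly.eval z S t) = n := by
    simp only [Node.lerp, Node.map, TriPoly.eval_lerp, n]
  refine ⟨n, ?_, fun S hS t ht => ⟨?_, ?_⟩⟩
  · rw [show n.M = u.M + (v.M - u.M) * z from rfl, hz_def, mul_div_cancel₀ _ huv'.ne']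
    ring
  · simpa [Node.map_lowerSlack (TriPoly.isEvaluation_eval z S t), map_lerp, TriPoly.eval_S,
      TriPoly.eval_t] using TriPoly.eval_nonneg_of_certifyNonneg hlower hz hS ht
  · simpa [Node.map_upperSlack (TriPoly.isEvaluation_eval z S t), map_lerp, TriPoly.eval_S,
      TriPoly.eval_t] using TriPoly.eval_nonneg_of_certifyNonneg hupper hz hS ht

end Certificate

theorem exists_isLowerPotential {m : ℝ} (hm0 : 0 < m) (hm1 : m < 1) :
    ∃ A, IsLowerPotential m A ∧ IsLowerPotential (1 - m) (swapStates A) := by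
  wlog hm : m ≤ 1 / 2 generalizing m
  · obtain ⟨A, hA, hA'⟩ := this (m := 1 - m) (by linarith) (by linarith) (by linarith)
    exact ⟨swapStates A, by rwa [sub_sub_cancel] at hA', by rwa [swapStates_swapStates]⟩
  obtain ⟨n, hM, hn⟩ := exists_node hm0.le hm
  have hM0 : 0 < n.M := by linarith
  have hM1 : n.M < 1000 := by linarith
  refine ⟨n.potential, ?_, ?_⟩
  · refine n.isLowerPotential_potential hM0 hM1 hm0 hm1 (by rw [hM]; ring) fun S hS t ht => ?_
    simpa [Node.lowerSlack, hM] using (hn S hS t ht).1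
  · rw [← n.potential_swap]
    refine n.swap.isLowerPotential_potential hM0 hM1 (by linarith) (by linarith) ?_
      fun S hS t ht => ?_
    · change n.M * (1000 - n.M) = _
      rw [hM]
      ring
    · simpa [Node.upperSlack, hM, mul_sub] using (hn S hS t ht).2

theorem exists_isDualPotential {m : ℝ} (hm0 : 0 < m) (hm1 : m < 1) :
    ∃ A, IsDualPotential (relativeLoss m) m (1 / 40) A :=
  let ⟨A, hA, hA'⟩ := exists_isLowerPotential hm0 hm1
  ⟨A, isDualPotential_of_isLowerPotential hm0 hm1 hA hA'⟩

/-- Proposition 2: the relative loss of the modified average-prior scheme on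
every extreme conditionally independent two-expert information structure is at most 0.025.
(Summands whose probability factor vanishes are automatically zero since `0/0 = 0`.) -/
theorem stmt_7 (μ y₁ z₁ y₂ z₂ : ℝ)
    (hμ0 : 0 < μ) (hμ1 : μ < 1)
    (hy₁0 : 0 ≤ y₁) (hy₁ : y₁ ≤ μ) (hz₁ : μ ≤ z₁) (hz₁1 : z₁ ≤ 1) (h₁ : y₁ < z₁)
    (hy₂0 : 0 ≤ y₂) (hy₂ : y₂ ≤ μ) (hz₂ : μ ≤ z₂) (hz₂1 : z₂ ≤ 1) (h₂ : y₂ < z₂) :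
    ((z₁-μ)/(z₁-y₁)) * ((z₂-μ)/(z₂-y₂)) * ((1-y₁)*(1-y₂)/(1-μ) + y₁*y₂/μ)
        * (gB μ y₁ y₂ - fmod y₁ y₂)^2
    + ((z₁-μ)/(z₁-y₁)) * ((μ-y₂)/(z₂-y₂)) * ((1-y₁)*(1-z₂)/(1-μ) + y₁*z₂/μ)
        * (gB μ y₁ z₂ - fmod y₁ z₂)^2
    + ((μ-y₁)/(z₁-y₁)) * ((z₂-μ)/(z₂-y₂)) * ((1-z₁)*(1-y₂)/(1-μ) + z₁*y₂/μ)
        * (gB μ z₁ y₂ - fmod z₁ y₂)^2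
    + ((μ-y₁)/(z₁-y₁)) * ((μ-y₂)/(z₂-y₂)) * ((1-z₁)*(1-z₂)/(1-μ) + z₁*z₂/μ)
        * (gB μ z₁ z₂ - fmod z₁ z₂)^2
    ≤ 0.025 := by
  obtain ⟨A, hA⟩ := exists_isDualPotential hμ0 hμ1
  have bound := hA.twoPointExp_le hy₁0 hy₁ hz₁ hz₁1 h₁ hy₂0 hy₂ hz₂ hz₂1 h₂
  calc
    _ = twoPointExp μ y₁ z₁ (fun v => twoPointExp μ y₂ z₂ (relativeLoss μ v)) := by
      simp only [twoPointExp, relativeLoss]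
      ring
    _ ≤ 0.025 := bound.trans_eq (by norm_num)
end
end

section
/- For every integer n ≥ 2 and every function f : [0,1]^n → [0,1], there exists a finite set S and a probability distribution P on {0,1} × S^n with coordinates (ω, s₁, …, s_n), under which s₁, …, s_n are independent and identically distributed conditional on ω, such that E_P[ ( f(x₁(s₁), …, x_n(s_n)) − x̂(s₁, …, s_n) )² ] ≥ 1/4 − 3·√(log n / n), where x_i(t) = P(ω = 1 | s_i = t) and x̂(t₁, …, t_n) = P(ω = 1 | s₁ = t₁, …, s_n = t_n) (conditional probabilities taken on positive-probability events). -/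
/-! Fix `ρ = 1 + 3ε` with `ε = √(log n / n)` and consider the binary signals of odds `ρ ^ (2k - 1)`.
In the `k`-th information structure the signal has odds `ρ ^ (2k - 1)` in state `false` and
`ρ ^ (2k + 1)` in state `true`, under the prior that makes the two possible forecasts `1 / (1 + ρ)`
and `ρ / (1 + ρ)`. These forecasts do not depend on `k`, so neither does the function of the signals
that the aggregation scheme computes, and the scheme cannot tell `true` in the `k`-th structure from
`false` in the next one: its squared distances to these two states add up to at least `1/2`.
Averaging over about `1 / (6ε)` structures, in each of which both states have prior close to `1/2`,
gives one whose aggregate is at squared distance nearly `1/4` from the true state. The omniscient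
expert in turn is almost never wrong, because the Bhattacharyya coefficient of the two signal
distributions is at most `√(1 - ε²)`, and its `n`-th power is at most `1 / √n`. -/

open Finset

/-- Expectation of `g` under the law of signals `s i`, `i : ι`, drawn independently from `D`. -/
def iidExpect {ι S : Type*} [Fintype ι] [DecidableEq ι] [Fintype S] (D : S → ℝ)
    (g : (ι → S) → ℝ) : ℝ :=
  ∑ s, (∏ i, D (s i)) * g s

/-- The Bhattacharyya coefficient, measuring the overlap of two finite distributions. -/
noncomputable def bhattacharyya {S : Type*} [Fintype S] (D D' : S → ℝ) : ℝ :=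
  ∑ t, √(D t * D' t)

section IidExpect

variable {ι S : Type*} [Fintype ι] [DecidableEq ι] [Fintype S] {D D' : S → ℝ}

lemma iidExpect_nonneg (hD : ∀ t, 0 ≤ D t) {g : (ι → S) → ℝ} (hg : ∀ s, 0 ≤ g s) :
    0 ≤ iidExpect D g :=
  sum_nonneg fun s _ ↦ mul_nonneg (prod_nonneg fun _ _ ↦ hD _) (hg s)

lemma half_le_iidExpect_sq_add_one_sub_sq (hD : D ∈ stdSimplex ℝ S) (F : (ι → S) → ℝ) :
    1 / 2 ≤ iidExpect D (fun s ↦ F s ^ 2) + iidExpect D (fun s ↦ (1 - F s) ^ 2) := by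
  have total_mass : ∑ s : ι → S, ∏ i, D (s i) = 1 := by
    rw [← Fintype.prod_sum fun (_ : ι) t ↦ D t]
    simp [hD.2]
  calc (1 / 2 : ℝ) = ∑ s : ι → S, (∏ i, D (s i)) * (1 / 2) := by rw [← sum_mul, total_mass, one_mul]
    _ ≤ ∑ s : ι → S, (∏ i, D (s i)) * (F s ^ 2 + (1 - F s) ^ 2) := by
      gcongr with s
      · exact prod_nonneg fun _ _ ↦ hD.1 _
      · nlinarith [sq_nonneg (2 * F s - 1)]
    _ = _ := by simp only [iidExpect, mul_add, sum_add_distrib]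

lemma sum_sqrt_prod_mul_prod (hD : ∀ t, 0 ≤ D t) (hD' : ∀ t, 0 ≤ D' t) :
    ∑ s : ι → S, √((∏ i, D (s i)) * ∏ i, D' (s i)) = bhattacharyya D D' ^ Fintype.card ι := by
  simp only [← prod_mul_distrib, Real.sqrt_prod _ fun _ _ ↦ mul_nonneg (hD _) (hD' _)]
  rw [← Fintype.prod_sum fun (_ : ι) t ↦ √(D t * D' t)]
  simp [bhattacharyya]

end IidExpect

lemma mul_div_add_le_sqrt_div_two {a b : ℝ} (ha : 0 ≤ a) (hb : 0 ≤ b) :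
    a * b / (a + b) ≤ √(a * b) / 2 := by
  have am_gm : 2 * √(a * b) ≤ a + b := by
    have := two_mul_le_add_sq √a √b
    rwa [Real.sq_sqrt ha, Real.sq_sqrt hb, mul_assoc, ← Real.sqrt_mul ha] at this
  refine div_le_of_le_mul₀ (by positivity) (by positivity) ?_
  nlinarith [Real.sq_sqrt (mul_nonneg ha hb), Real.sqrt_nonneg (a * b)]

lemma add_mul_sub_div_add_sq {K : Type*} [Field K] {a b : K} (h : a + b ≠ 0) (x : K) :
    (a + b) * (x - b / (a + b)) ^ 2 = a * x ^ 2 + b * (1 - x) ^ 2 - a * b / (a + b) := by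
  field_simp
  ring

lemma sub_sqrt_le_add_mul_sub_div_add_sq {a b : ℝ} (ha : 0 ≤ a) (hb : 0 ≤ b) (x : ℝ) :
    a * x ^ 2 + b * (1 - x) ^ 2 - √(a * b) / 2 ≤ (a + b) * (x - b / (a + b)) ^ 2 := by
  rcases eq_or_ne (a + b) 0 with h | h
  · obtain ⟨rfl, rfl⟩ := (add_eq_zero_iff_of_nonneg ha hb).1 h
    simp
  · rw [add_mul_sub_div_add_sq h]
    linarith [mul_div_add_le_sqrt_div_two ha hb]

lemma exists_le_add_succ {K : Type*} [Field K] [LinearOrder K] [IsStrictOrderedRing K]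
    {A C : ℕ → K} {c : K} (hA : ∀ k, 0 ≤ A k) (hC : ∀ k, 0 ≤ C k) (h : ∀ k, c ≤ A k + C k)
    (m : ℕ) : ∃ k ≤ m, m / (m + 1) * c ≤ A k + C (k + 1) := by
  have sum_ge : ∑ _k ∈ range (m + 1), (m / (m + 1) * c : K) ≤
      ∑ k ∈ range (m + 1), (A k + C (k + 1)) :=
    calc ∑ _k ∈ range (m + 1), (m / (m + 1) * c : K) = ∑ _k ∈ range m, c := by
          simp only [sum_const, card_range, nsmul_eq_mul, Nat.cast_add, Nat.cast_one]
          field_simp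
      _ ≤ ∑ k ∈ range m, (A (k + 1) + C (k + 1)) := sum_le_sum fun k _ ↦ h (k + 1)
      _ ≤ ∑ k ∈ range (m + 1), (A k + C (k + 1)) := by
          rw [sum_add_distrib, sum_add_distrib, sum_range_succ' A,
            sum_range_succ fun k ↦ C (k + 1)]
          linarith [hA 0, hC (m + 1)]
  obtain ⟨k, hk, hle⟩ := exists_le_of_sum_le nonempty_range_add_one sum_ge
  exact ⟨k, Nat.lt_succ_iff.1 (mem_range.1 hk), hle⟩

lemma one_add_pow_le_three {x : ℝ} (hx : 0 ≤ x) {k : ℕ} (hk : k * x ≤ 1) : (1 + x) ^ k ≤ 3 :=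
  calc (1 + x) ^ k ≤ Real.exp x ^ k := by
        gcongr
        linarith [Real.add_one_le_exp x]
    _ = Real.exp (k * x) := (Real.exp_nat_mul x k).symm
    _ ≤ Real.exp 1 := Real.exp_le_exp.2 hk
    _ ≤ 3 := by linarith [Real.exp_one_lt_d9]

lemma pow_le_exp_of_sq_le_one_sub {B δ : ℝ} (hB : B ^ 2 ≤ 1 - δ) (hB0 : 0 ≤ B) (n : ℕ) :
    B ^ n ≤ Real.exp (-(n * δ) / 2) :=
  calc B ^ n ≤ Real.exp (-δ / 2) ^ n := by
        gcongr
        rw [Real.exp_half]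
        exact Real.le_sqrt_of_sq_le (hB.trans (Real.one_sub_le_exp_neg δ))
    _ = Real.exp (-(n * δ) / 2) := by
        rw [← Real.exp_nat_mul]
        ring_nf

lemma exp_neg_log_div_two_le {x : ℝ} (hx : 2 ≤ x) :
    Real.exp (-Real.log x / 2) ≤ 2 * √(Real.log x / x) := by
  have hx0 : 0 < x := by linarith
  have half_le_log : 1 / 2 ≤ Real.log x := by
    have := Real.one_sub_inv_le_log_of_pos hx0
    have := inv_anti₀ two_pos hx
    linarith
  have sqrt_four : (2 : ℝ) = √(2 ^ 2) := (Real.sqrt_sq two_pos.le).symm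
  rw [Real.exp_half, Real.exp_neg, Real.exp_log hx0, sqrt_four, ← Real.sqrt_mul (by positivity),
    inv_eq_one_div, ← mul_div_assoc]
  gcongr
  linarith

/-- A conditionally i.i.d. information structure with signal set `S`: the state is `ω : Bool`, with
`true` standing for `ω = 1`, and every expert's signal has law `signal ω` given `ω`. -/
structure CondIIDStructure (S : Type*) [Fintype S] where
  prior : Bool → ℝ
  signal : Bool → S → ℝ
  prior_mem : prior ∈ stdSimplex ℝ Bool
  signal_mem : ∀ b, signal b ∈ stdSimplex ℝ S

namespace CondIIDStructure

variable {S : Type*} [Fintype S] (P : CondIIDStructure S)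

/-- The forecast `P(ω = 1 | s_i = t)` of an expert who sees the signal `t`. If `t` has probability
zero this is `0`, and contributes nothing to the loss. -/
noncomputable def forecast (t : S) : ℝ :=
  P.prior true * P.signal true t /
    (P.prior false * P.signal false t + P.prior true * P.signal true t)

variable {ι : Type*} [Fintype ι]

/-- The forecast `P(ω = 1 | s)` of the omniscient expert, who sees all signals; `0` if `s` has
probability zero. -/
noncomputable def omniscientForecast (s : ι → S) : ℝ :=
  (P.prior true * ∏ i, P.signal true (s i)) /
    (P.prior false * ∏ i, P.signal false (s i) + P.prior true * ∏ i, P.signal true (s i))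

variable [DecidableEq ι] (f : (ι → ℝ) → ℝ)

/-- The loss `E[(f(x₁, …, x_n) - x̂)²]` of the aggregation scheme `f` relative to the omniscient
expert. -/
noncomputable def relativeLoss : ℝ :=
  ∑ b, ∑ s : ι → S, (P.prior b * ∏ i, P.signal b (s i)) *
    (f (fun i ↦ P.forecast (s i)) - P.omniscientForecast s) ^ 2

/-- The expected squared distance of the aggregate to the state itself, valued `0` or `1`, rather
than to the omniscient forecast. -/
noncomputable def stateLoss : ℝ :=
  P.prior false * iidExpect (P.signal false) (fun s : ι → S ↦ f (fun i ↦ P.forecast (s i)) ^ 2) +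
    P.prior true *
      iidExpect (P.signal true) (fun s : ι → S ↦ (1 - f (fun i ↦ P.forecast (s i))) ^ 2)

lemma prior_false_add_prior_true : P.prior false + P.prior true = 1 := by
  simpa [add_comm] using P.prior_mem.2

lemma relativeLoss_nonneg : 0 ≤ P.relativeLoss f :=
  sum_nonneg fun b _ ↦ sum_nonneg fun s _ ↦ mul_nonneg
    (mul_nonneg (P.prior_mem.1 b) (prod_nonneg fun i _ ↦ (P.signal_mem b).1 (s i))) (sq_nonneg _)

lemma sqrt_prior_mul_prior_le_half : √(P.prior false * P.prior true) ≤ 1 / 2 := by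
  rw [Real.sqrt_le_left (by norm_num)]
  nlinarith [sq_nonneg (P.prior false - P.prior true), P.prior_false_add_prior_true]

lemma stateLoss_sub_le_relativeLoss :
    P.stateLoss f - bhattacharyya (P.signal false) (P.signal true) ^ Fintype.card ι / 4 ≤
      P.relativeLoss f := by
  set F : (ι → S) → ℝ := fun s ↦ f fun i ↦ P.forecast (s i)
  let G : Bool → (ι → S) → ℝ := fun b s ↦ ∏ i, P.signal b (s i)
  have G_nonneg (b s) : 0 ≤ G b s := prod_nonneg fun i _ ↦ (P.signal_mem b).1 (s i)
  have pointwise (s : ι → S) :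
      P.prior false * (G false s * F s ^ 2) + P.prior true * (G true s * (1 - F s) ^ 2) -
          √(G false s * G true s) / 4 ≤
        P.prior true * G true s * (F s - P.omniscientForecast s) ^ 2 +
          P.prior false * G false s * (F s - P.omniscientForecast s) ^ 2 := by
    have posterior_loss := sub_sqrt_le_add_mul_sub_div_add_sq
      (mul_nonneg (P.prior_mem.1 false) (G_nonneg false s))
      (mul_nonneg (P.prior_mem.1 true) (G_nonneg true s)) (F s)
    rw [mul_mul_mul_comm,
      Real.sqrt_mul (mul_nonneg (P.prior_mem.1 false) (P.prior_mem.1 true))] at posterior_loss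
    have overlap := mul_le_mul_of_nonneg_right P.sqrt_prior_mul_prior_le_half
      (Real.sqrt_nonneg (G false s * G true s))
    simp only [omniscientForecast]
    linarith
  rw [← sum_sqrt_prod_mul_prod (P.signal_mem false).1 (P.signal_mem true).1]
  simp only [stateLoss, relativeLoss, iidExpect, Fintype.sum_bool, mul_sum, sum_div,
    ← sum_add_distrib, ← sum_sub_distrib]
  exact sum_le_sum fun s _ ↦ pointwise s

end CondIIDStructure

/-- The distribution on `{0, 1}` under which `1` has odds `o`, i.e. probability `o / (1 + o)`. -/
noncomputable def oddsDist (o : ℝ) : Fin 2 → ℝ := ![1 / (1 + o), o / (1 + o)]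

lemma oddsDist_mem_stdSimplex {o : ℝ} (ho : 0 ≤ o) : oddsDist o ∈ stdSimplex ℝ (Fin 2) := by
  refine ⟨fun t ↦ ?_, ?_⟩
  · fin_cases t
    · exact one_div_nonneg.2 (by positivity)
    · exact div_nonneg ho (by positivity)
  · simp only [oddsDist, Fin.sum_univ_two, Matrix.cons_val_zero, Matrix.cons_val_one]
    field_simp

lemma bhattacharyya_oddsDist_sq {a b : ℝ} (ha : 0 ≤ a) (hb : 0 ≤ b) :
    bhattacharyya (oddsDist a) (oddsDist b) ^ 2 = (1 + √(a * b)) ^ 2 / ((1 + a) * (1 + b)) := by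
  have hD : 0 ≤ (1 + a) * (1 + b) := by positivity
  simp only [bhattacharyya, oddsDist, Fin.sum_univ_two, Matrix.cons_val_zero, Matrix.cons_val_one,
    div_mul_div_comm, Real.sqrt_div' _ hD, mul_one, Real.sqrt_one]
  rw [← add_div, div_pow, Real.sq_sqrt hD]

lemma bhattacharyya_oddsDist_sq_le {ρ y : ℝ} (hρ : 0 < ρ) (hρ' : ρ ≤ 5 / 4) (hy : 1 ≤ y)
    (hy' : y ≤ 3) :
    bhattacharyya (oddsDist (y / ρ)) (oddsDist (ρ * y)) ^ 2 ≤ 1 - ((ρ - 1) / 3) ^ 2 := by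
  have hy0 : 0 < y := by linarith
  have denominator_le : (ρ + y) * (1 + ρ * y) ≤ 9 * y := by
    calc (ρ + y) * (1 + ρ * y) ≤ (5 / 4 + y) * (1 + 5 / 4 * y) := by gcongr
      _ ≤ 9 * y := by nlinarith
  have gap : 1 - (1 + y) ^ 2 / ((1 + y / ρ) * (1 + ρ * y)) =
      y * (ρ - 1) ^ 2 / ((ρ + y) * (1 + ρ * y)) := by
    field_simp
    ring
  have gap_ge : ((ρ - 1) / 3) ^ 2 ≤ y * (ρ - 1) ^ 2 / ((ρ + y) * (1 + ρ * y)) := by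
    rw [le_div_iff₀ (by positivity)]
    nlinarith [mul_le_mul_of_nonneg_left denominator_le (sq_nonneg (ρ - 1))]
  rw [bhattacharyya_oddsDist_sq (by positivity) (by positivity),
    show y / ρ * (ρ * y) = y ^ 2 by field_simp, Real.sqrt_sq hy0.le]
  linarith

lemma bhattacharyya_oddsDist_pow_le {ρ y : ℝ} (hρ : 0 < ρ) (hρ' : ρ ≤ 5 / 4) (hy : 1 ≤ y)
    (hy' : y ≤ 3) (n : ℕ) :
    bhattacharyya (oddsDist (y / ρ)) (oddsDist (ρ * y)) ^ n ≤
      Real.exp (-(n * ((ρ - 1) / 3) ^ 2) / 2) :=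
  pow_le_exp_of_sq_le_one_sub (bhattacharyya_oddsDist_sq_le hρ hρ' hy hy')
    (sum_nonneg fun _ _ ↦ Real.sqrt_nonneg _) n

namespace CondIIDStructure

/-- The binary structure whose signal has odds `y / ρ` in state `false` and `ρ * y` in state `true`,
with the prior for which the posterior odds of `true` after the signals `0` and `1` are `1 / ρ`
and `ρ`, whatever `y` is. -/
noncomputable def ofOdds {ρ y : ℝ} (hρ : 0 < ρ) (hy : 0 < y) : CondIIDStructure (Fin 2) where
  prior b := (if b then 1 + ρ * y else ρ + y) / ((1 + ρ) * (1 + y))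
  signal b := oddsDist (if b then ρ * y else y / ρ)
  prior_mem := by
    refine ⟨fun b ↦ ?_, ?_⟩
    · cases b <;> simp only [if_true, Bool.false_eq_true, if_false] <;> positivity
    · simp only [Fintype.sum_bool, if_true, Bool.false_eq_true, if_false]
      field_simp
      ring
  signal_mem b := oddsDist_mem_stdSimplex (by split_ifs <;> positivity)

section OfOdds

variable {ρ y : ℝ}

/-- The aggregate as a function of the signals, when the signals `0` and `1` lead to the forecasts
`1 / (1 + ρ)` and `ρ / (1 + ρ)`. -/
noncomputable def binaryAggregate {ι : Type*} (ρ : ℝ) (f : (ι → ℝ) → ℝ) (s : ι → Fin 2) : ℝ :=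
  f fun i ↦ ![1 / (1 + ρ), ρ / (1 + ρ)] (s i)

lemma forecast_ofOdds (hρ : 0 < ρ) (hy : 0 < y) :
    (ofOdds hρ hy).forecast = ![1 / (1 + ρ), ρ / (1 + ρ)] := by
  ext t
  fin_cases t
  · simp only [forecast, ofOdds, oddsDist, if_true, Bool.false_eq_true, if_false, Fin.zero_eta,
      Matrix.cons_val_zero]
    field_simp
    ring
  · simp only [forecast, ofOdds, oddsDist, if_true, Bool.false_eq_true, if_false, Fin.mk_one,
      Matrix.cons_val_one, Matrix.cons_val_fin_one]
    field_simp

lemma signal_ofOdds (hρ : 0 < ρ) (hy : 0 < y) (b : Bool) :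
    (ofOdds hρ hy).signal b = oddsDist (if b then ρ * y else y / ρ) := rfl

lemma one_div_le_prior_ofOdds (hρ : 1 ≤ ρ) (hy : 0 < y) (b : Bool) :
    1 / (1 + ρ) ≤ (ofOdds (one_pos.trans_le hρ) hy).prior b := by
  have : 0 < ρ := one_pos.trans_le hρ
  rw [← mul_div_mul_right 1 (1 + ρ) (by positivity : 1 + y ≠ 0), ofOdds]
  refine div_le_div_of_nonneg_right ?_ (by positivity)
  cases b <;> simp only [if_true, Bool.false_eq_true, if_false] <;> nlinarith

variable {ι : Type*} [Fintype ι] [DecidableEq ι]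

lemma le_stateLoss_ofOdds (hρ : 1 ≤ ρ) (hy : 0 < y) (f : (ι → ℝ) → ℝ) :
    1 / (1 + ρ) * (iidExpect (oddsDist (y / ρ)) (fun s ↦ binaryAggregate ρ f s ^ 2) +
        iidExpect (oddsDist (ρ * y)) (fun s ↦ (1 - binaryAggregate ρ f s) ^ 2)) ≤
      (ofOdds (one_pos.trans_le hρ) hy).stateLoss f := by
  have : 0 < ρ := one_pos.trans_le hρ
  simp only [stateLoss, forecast_ofOdds, signal_ofOdds, mul_add, if_true, Bool.false_eq_true,
    if_false]
  exact add_le_add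
    (mul_le_mul_of_nonneg_right (one_div_le_prior_ofOdds hρ hy false)
      (iidExpect_nonneg (oddsDist_mem_stdSimplex (by positivity)).1 fun _ ↦ sq_nonneg _))
    (mul_le_mul_of_nonneg_right (one_div_le_prior_ofOdds hρ hy true)
      (iidExpect_nonneg (oddsDist_mem_stdSimplex (by positivity)).1 fun _ ↦ sq_nonneg _))

lemma stateLoss_ofOdds_sub_le_relativeLoss (hρ : 0 < ρ) (hy : 0 < y) (f : (ι → ℝ) → ℝ) :
    (ofOdds hρ hy).stateLoss f -
        bhattacharyya (oddsDist (y / ρ)) (oddsDist (ρ * y)) ^ Fintype.card ι / 4 ≤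
      (ofOdds hρ hy).relativeLoss f := by
  simpa only [signal_ofOdds, if_true, Bool.false_eq_true, if_false] using
    (ofOdds hρ hy).stateLoss_sub_le_relativeLoss f

lemma exists_le_stateLoss_ofOdds_pow (hρ : 1 ≤ ρ) (f : (ι → ℝ) → ℝ) (m : ℕ) :
    ∃ k ≤ m, ∃ hy : 0 < ρ ^ (2 * k),
      1 / (1 + ρ) * (m / (m + 1) * (1 / 2)) ≤ (ofOdds (one_pos.trans_le hρ) hy).stateLoss f := by
  have : 0 < ρ := one_pos.trans_le hρ
  let D (k : ℕ) : Fin 2 → ℝ := oddsDist (ρ ^ (2 * k) / ρ)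
  have D_mem (k) : D k ∈ stdSimplex ℝ (Fin 2) := oddsDist_mem_stdSimplex (by positivity)
  have D_succ (k) : D (k + 1) = oddsDist (ρ * ρ ^ (2 * k)) := by
    simp only [D]
    congr 1
    field_simp
    ring
  obtain ⟨k, hk, hle⟩ := exists_le_add_succ
    (fun k ↦ iidExpect_nonneg (D_mem k).1 fun s ↦ sq_nonneg (binaryAggregate ρ f s))
    (fun k ↦ iidExpect_nonneg (D_mem k).1 fun s ↦ sq_nonneg (1 - binaryAggregate ρ f s))
    (fun k ↦ half_le_iidExpect_sq_add_one_sub_sq (D_mem k) (binaryAggregate ρ f)) m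
  rw [D_succ] at hle
  refine ⟨k, hk, by positivity, le_trans ?_ (le_stateLoss_ofOdds hρ _ f)⟩
  gcongr

lemma exists_le_relativeLoss {ε : ℝ} (hε : 0 < ε) (hε' : ε ≤ 1 / 12) (f : (ι → ℝ) → ℝ) :
    ∃ P : CondIIDStructure (Fin 2),
      1 / 4 - 15 / 8 * ε - Real.exp (-(Fintype.card ι * ε ^ 2) / 2) / 4 ≤ P.relativeLoss f := by
  set m := ⌊1 / (6 * ε)⌋₊
  have m_le : m * (6 * ε) ≤ 1 := (le_div_iff₀ (by positivity)).1 (Nat.floor_le (by positivity))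
  have one_le : 1 ≤ (m + 1) * (6 * ε) :=
    (div_le_iff₀ (by positivity)).1 (Nat.lt_floor_add_one (1 / (6 * ε))).le
  have hρ : 1 ≤ 1 + 3 * ε := by linarith
  obtain ⟨k, hk, hy, loss_ge⟩ := exists_le_stateLoss_ofOdds_pow hρ f m
  refine ⟨ofOdds (one_pos.trans_le hρ) hy,
    le_trans ?_ (stateLoss_ofOdds_sub_le_relativeLoss (one_pos.trans_le hρ) hy f)⟩
  have hkm : (k : ℝ) ≤ m := by exact_mod_cast hk
  have y_le : (1 + 3 * ε) ^ (2 * k) ≤ 3 :=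
    one_add_pow_le_three (by positivity) (by push_cast; nlinarith)
  have overlap_le := bhattacharyya_oddsDist_pow_le (one_pos.trans_le hρ) (by linarith)
    (one_le_pow₀ hρ) y_le (Fintype.card ι)
  rw [add_sub_cancel_left, mul_div_cancel_left₀ ε three_ne_zero] at overlap_le
  have ratio_ge : 1 - 6 * ε ≤ m / (m + 1) := by
    rw [le_div_iff₀ (by positivity)]
    linarith
  have prior_ge : 1 / 2 - 3 / 4 * ε ≤ 1 / (1 + (1 + 3 * ε)) := by
    rw [le_div_iff₀ (by positivity)]
    nlinarith
  have := mul_le_mul prior_ge ratio_ge (by linarith) (by positivity)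
  nlinarith

end OfOdds

end CondIIDStructure

theorem stmt_19_general (n : ℕ) (hn : 2 ≤ n) (f : (Fin n → ℝ) → ℝ) :
    ∃ P : CondIIDStructure (Fin 2), 1 / 4 - 3 * √(Real.log n / n) ≤ P.relativeLoss f := by
  have hn2 : (2 : ℝ) ≤ n := by exact_mod_cast hn
  have hlog : 0 < Real.log n := Real.log_pos (by linarith)
  have hε : 0 < √(Real.log n / n) := by positivity
  rcases lt_or_ge (1 / 12) √(Real.log n / n) with large | small
  · exact ⟨.ofOdds one_pos one_pos,
      le_trans (by linarith) (CondIIDStructure.relativeLoss_nonneg _ f)⟩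
  obtain ⟨P, loss_ge⟩ := CondIIDStructure.exists_le_relativeLoss hε small f
  have exponent : (Fintype.card (Fin n) : ℝ) * √(Real.log n / n) ^ 2 = Real.log n := by
    rw [Fintype.card_fin, Real.sq_sqrt (by positivity)]
    field_simp
  rw [exponent] at loss_ge
  exact ⟨P, by linarith [exp_neg_log_div_two_le hn2]⟩

/-- Theorem 3: for every `n ≥ 2` and every aggregation scheme
`f : [0,1]^n → [0,1]`, there is a conditionally i.i.d. information structure — given by a
finite signal set `Fin N`, a prior `w` on the state, and a conditional signal distribution
`q` — on which the relative loss `E[(f(x₁,…,x_n) - x̂)²]` is at least `1/4 - 3√(log n / n)`. -/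
theorem stmt_19 (n : ℕ) (hn : 2 ≤ n) (f : (Fin n → ℝ) → ℝ)
    (hf : ∀ v : Fin n → ℝ, (∀ i, v i ∈ Set.Icc (0:ℝ) 1) → f v ∈ Set.Icc (0:ℝ) 1) :
    ∃ (N : ℕ) (w : Bool → ℝ) (q : Bool → Fin N → ℝ),
      (∀ b, 0 ≤ w b) ∧ w false + w true = 1 ∧
      (∀ b t, 0 ≤ q b t) ∧ (∀ b, ∑ t : Fin N, q b t = 1) ∧
      1/4 - 3 * Real.sqrt (Real.log n / n) ≤
        ∑ b : Bool, ∑ s : Fin n → Fin N,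
          (w b * ∏ i, q b (s i)) *
          (f (fun i => (w true * q true (s i)) /
                (w false * q false (s i) + w true * q true (s i)))
            - (w true * ∏ i, q true (s i)) /
               (w false * ∏ i, q false (s i) + w true * ∏ i, q true (s i)))^2 := by
  obtain ⟨P, hP⟩ := stmt_19_general n hn f
  exact ⟨2, P.prior, P.signal, P.prior_mem.1, P.prior_false_add_prior_true,
    fun b ↦ (P.signal_mem b).1, fun b ↦ (P.signal_mem b).2, hP⟩
end
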